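/- arXiv:1302.4703 — 2 statements merged into one kernel-verified Lean document; each statement's English description precedes it below -/
import Mathlib

section
/- Any two maximal caps in AG(4,3) with anchor equal to the zero vector are linearly equivalent: there is a linear automorphism T of (Fin 4 → ZMod 3) mapping one onto the other. -/
/-- A cap in `AG(n,3)`: a finite set of points of `Fin n → ZMod 3` containing no
three distinct collinear points (three distinct points are collinear iff they sum to zero). -/
def IsCap {n : ℕ} (C : Finset (Fin n → ZMod 3)) : Prop :=
  ∀ x ∈ C, ∀ y ∈ C, ∀ z ∈ C, x ≠ y → x ≠ z → y ≠ z → x + y + z ≠ 0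

/-- A maximal cap: a cap of largest possible size. -/
def MaximalCap {n : ℕ} (C : Finset (Fin n → ZMod 3)) : Prop :=
  IsCap C ∧ ∀ D : Finset (Fin n → ZMod 3), IsCap D → D.card ≤ C.card

namespace CapProof

/-- The ambient space. -/
abbrev V := Fin 4 → ZMod 3

/-- Decoding of natural numbers (octal digits) as vectors. -/
def dec (n : ℕ) : V :=
  ![((n % 8 : ℕ) : ZMod 3), ((n / 8 % 8 : ℕ) : ZMod 3), ((n / 64 % 8 : ℕ) : ZMod 3),
    ((n / 512 % 8 : ℕ) : ZMod 3)]

/-- One digit of the third point. -/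
def tdig (a b : ℕ) : ℕ := (2 * (a % 8 + b % 8)) % 3

/-- Code of the third point on the line through two points. -/
def third (a b : ℕ) : ℕ :=
  tdig a b + 8 * tdig (a / 8) (b / 8) + 64 * tdig (a / 64) (b / 64)
    + 512 * tdig (a / 512) (b / 512)

theorem tdig_lt (a b : ℕ) : tdig a b < 3 := Nat.mod_lt _ (by norm_num)

theorem tdig_cast (a b : ℕ) :
    ((tdig a b : ℕ) : ZMod 3) = -(((a % 8 : ℕ) : ZMod 3) + ((b % 8 : ℕ) : ZMod 3)) := by
  unfold tdig
  rw [ZMod.natCast_mod]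
  push_cast
  generalize ((a % 8 : ℕ) : ZMod 3) = x
  generalize ((b % 8 : ℕ) : ZMod 3) = y
  revert x y
  decide

theorem dec_third (a b : ℕ) : dec (third a b) = -(dec a + dec b) := by
  have h0 := tdig_lt a b
  have h1 := tdig_lt (a / 8) (b / 8)
  have h2 := tdig_lt (a / 64) (b / 64)
  have h3 := tdig_lt (a / 512) (b / 512)
  have e0 : third a b % 8 = tdig a b := by unfold third; omega
  have e1 : third a b / 8 % 8 = tdig (a / 8) (b / 8) := by unfold third; omega
  have e2 : third a b / 64 % 8 = tdig (a / 64) (b / 64) := by unfold third; omega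
  have e3 : third a b / 512 % 8 = tdig (a / 512) (b / 512) := by unfold third; omega
  funext i
  fin_cases i <;> simp [dec, e0, e1, e2, e3, tdig_cast]

/-- Remove candidates collinear with the new point and an old one. -/
def prune (c : ℕ) (cs ch : List ℕ) : List ℕ :=
  cs.filter (fun d => !((c :: ch).map (third c)).contains d)

/-- Backtracking search: every completion of `ch` by elements of `cs` to a cap with at
least nine points ends in a good leaf. -/
def search (leaf : List ℕ → Bool) : ℕ → List ℕ → List ℕ → Bool
  | 0, _, _ => false
  | _ + 1, [], ch => Nat.blt ch.length 9 || leaf ch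
  | f + 1, c :: cs, ch =>
    Nat.blt (cs.length + ch.length + 1) 9 ||
      (search leaf f (prune c cs ch) (c :: ch) && search leaf f cs ch)

/-- The set is covered by the codes in the list. -/
def Cov (s : Finset V) (l : List ℕ) : Prop := ∀ x ∈ s, ∃ c ∈ l, dec c = x

theorem Cov.card {s : Finset V} {l : List ℕ} (h : Cov s l) : s.card ≤ l.length := by
  have : s ⊆ (l.map dec).toFinset := by
    intro x hx
    obtain ⟨c, hc, rfl⟩ := h x hx
    simp only [List.mem_toFinset, List.mem_map]
    exact ⟨c, hc, rfl⟩
  calc s.card ≤ _ := Finset.card_le_card this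
    _ ≤ (l.map dec).length := List.toFinset_card_le _
    _ = _ := by simp

theorem Cov.push {s : Finset V} (hs : IsCap s) {c : ℕ} {cs ch : List ℕ}
    (hc : dec c ∈ s) (hch : ∀ h ∈ ch, dec h ∈ s) (h : Cov s (cs ++ c :: ch)) :
    Cov s (prune c cs ch ++ c :: ch) := by
  intro x hx
  obtain ⟨d, hd, rfl⟩ := h x hx
  rcases List.mem_append.1 hd with hd | hd
  · by_cases hp : d ∈ prune c cs ch
    · exact ⟨d, List.mem_append_left _ hp, rfl⟩
    · have : ∃ e ∈ c :: ch, third c e = d := by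
        by_contra hne
        apply hp
        unfold prune
        simp only [List.mem_filter, hd, true_and, List.contains_eq_mem, List.mem_map,
          Bool.not_eq_true', decide_eq_false_iff_not]
        exact hne
      obtain ⟨e, he, rfl⟩ := this
      have hes : dec e ∈ s := by
        rcases List.mem_cons.1 he with rfl | he
        · exact hc
        · exact hch e he
      have hsum : dec (third c e) + dec c + dec e = 0 := by rw [dec_third]; abel
      by_cases h1 : dec (third c e) = dec c
      · exact ⟨c, by simp, h1.symm⟩
      by_cases h2 : dec (third c e) = dec e
      · exact ⟨e, List.mem_append_right _ he, h2.symm⟩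
      by_cases h3 : dec c = dec e
      · exfalso
        apply h1
        rw [dec_third, ← h3]
        generalize dec c = v
        funext i
        simp only [Pi.neg_apply, Pi.add_apply]
        generalize v i = t
        revert t
        decide
      · exact absurd hsum (hs _ hx _ hc _ hes h1 h2 h3)
  · exact ⟨d, List.mem_append_right _ hd, rfl⟩

theorem search_sound (leaf : List ℕ → Bool) (s : Finset V) (hs : IsCap s) (h9 : 9 ≤ s.card) :
    ∀ (f : ℕ) (cs ch : List ℕ), search leaf f cs ch = true → (∀ h ∈ ch, dec h ∈ s) →
      Cov s (cs ++ ch) → ∃ l, leaf l = true ∧ Cov s l := by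
  intro f
  induction f with
  | zero => intro cs ch h; simp [search] at h
  | succ f ih =>
    intro cs ch h hch hcov
    have hcard := hcov.card
    cases cs with
    | nil =>
      simp only [List.nil_append] at hcov hcard
      simp only [search, Bool.or_eq_true, Nat.blt_eq] at h
      rcases h with h | h
      · omega
      · exact ⟨ch, h, hcov⟩
    | cons c cs =>
      simp only [search, Bool.or_eq_true, Nat.blt_eq, Bool.and_eq_true] at h
      rcases h with h | ⟨h1, h2⟩
      · simp at hcard; omega
      · by_cases hc : dec c ∈ s
        · refine ih _ _ h1 ?_ (Cov.push hs hc hch ?_)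
          · intro e he
            rcases List.mem_cons.1 he with rfl | he
            · exact hc
            · exact hch e he
          · intro x hx
            obtain ⟨d, hd, rfl⟩ := hcov x hx
            refine ⟨d, ?_, rfl⟩
            simp at hd ⊢
            tauto
        · refine ih _ _ h2 hch ?_
          intro x hx
          obtain ⟨d, hd, rfl⟩ := hcov x hx
          refine ⟨d, ?_, rfl⟩
          simp at hd ⊢
          rcases hd with rfl | hd | hd
          · exact absurd hx hc
          · exact Or.inl hd
          · exact Or.inr hd

/-- Membership in the standard 9-cap. -/
def inA (v : V) : Bool := v 0 == 1 && v 3 == v 1 * v 1 + v 2 * v 2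

/-- Matrix with columns four points of the standard 9-cap, two of them fixed. -/
def mat (p : V × V) : Matrix (Fin 4) (Fin 4) (ZMod 3) :=
  Matrix.of ![![1, 1, p.1 0, p.2 0], ![0, 0, p.1 1, p.2 1], ![0, 1, p.1 2, p.2 2],
    ![0, 1, p.1 3, p.2 3]]

/-- Points of the standard cap from the first two affine coordinates. -/
def par (x y : ZMod 3) : V := ![1, x, y, x * x + y * y]

/-- The eighteen linear maps needed. -/
def maps : List (V × V) :=
  [(par 0 2, par 1 0), (par 0 2, par 1 1), (par 0 2, par 1 2), (par 1 0, par 0 2), (par 1 0, par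
   1 2), (par 1 0, par 2 0), (par 1 0, par 2 1), (par 1 0, par 2 2), (par 1 1, par 0 2), (par 1
   1, par 1 2), (par 1 1, par 2 0), (par 1 1, par 2 1), (par 1 1, par 2 2), (par 1 2, par 0 2),
   (par 1 2, par 1 0), (par 1 2, par 1 1), (par 1 2, par 2 0), (par 1 2, par 2 1)]

theorem maps_det : ∀ p ∈ maps,
    p.1 1 * (p.2 3 - p.2 2) - p.2 1 * (p.1 3 - p.1 2) ≠ 0 := by
  have h : (maps.all fun p =>
      !(p.1 1 * (p.2 3 - p.2 2) - p.2 1 * (p.1 3 - p.1 2) == 0)) = true := by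
    decide +kernel
  intro p hp
  have := List.all_eq_true.1 h p hp
  simpa using this

theorem mat_inj (p : V × V) (hp : p ∈ maps) (v : V) (hv : (mat p).mulVec v = 0) : v = 0 := by
  have hD := maps_det p hp
  have e0 := congrFun hv 0
  have e1 := congrFun hv 1
  have e2 := congrFun hv 2
  have e3 := congrFun hv 3
  simp [mat, Matrix.mulVec, dotProduct, Fin.sum_univ_four] at e0 e1 e2 e3
  have h2 : v 2 = 0 := by
    refine (mul_eq_zero.1 ?_).resolve_left hD
    linear_combination (p.2 3 - p.2 2) * e1 - p.2 1 * (e3 - e2)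
  have h3 : v 3 = 0 := by
    refine (mul_eq_zero.1 ?_).resolve_left hD
    linear_combination (p.1 1) * (e3 - e2) - (p.1 3 - p.1 2) * e1
  have h1 : v 1 = 0 := by
    rw [h2, h3] at e2; simpa using e2
  have h0 : v 0 = 0 := by
    rw [h1, h2, h3] at e0; simpa using e0
  funext i
  fin_cases i <;> assumption

/-- Leaf test: the points found are mapped into the standard cap by one of the maps. -/
def leafA (l : List ℕ) : Bool :=
  maps.any (fun p => l.all (fun c => inA ((mat p).mulVec (dec c))))

/-- Codes of points with digits below three. -/
def codes : List ℕ :=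
  (List.range 3).flatMap fun a => (List.range 3).flatMap fun b =>
    (List.range 3).flatMap fun c => (List.range 3).map fun d => a + 8 * b + 64 * c + 512 * d

theorem dec_codes : ∀ a b c d : ZMod 3, ∃ n ∈ codes, dec n = ![a, b, c, d] := by
  decide +kernel

/-- Codes of points with coordinate sum one. -/
def codes1 : List ℕ := codes.filter (fun n => dec n 0 + dec n 1 + dec n 2 + dec n 3 == 1)

def c1 : List ℕ := prune 1 codes1 []
def c2 : List ℕ := (prune 8 c1 [1])
def c3 : List ℕ := (prune 64 c2 [8, 1])
def c4 : List ℕ := (prune 512 c3 [64, 8, 1])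

theorem searchA : search leafA 40 c4 [512, 64, 8, 1] = true := by
  decide +kernel

/-- Codes of level two avoiding the first cap and two points. -/
def candB (d : V) : List ℕ :=
  codes.filter (fun n => dec n 0 == 2 &&
    !(inA (-(dec n) + d)) && !(inA (-(dec n) - d)))

theorem searchB : ∀ x y z : ZMod 3, (x = 0 ∧ y = 0) ∨
    search (fun _ => false) 40 (candB ![0, x, y, z]) [] = true := by
  decide +kernel

theorem candB_vert : ∀ z : ZMod 3, z ≠ 0 → ∀ n ∈ candB ![0, 0, 0, z], inA (-(dec n)) = true := by
  decide +kernel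

end CapProof

namespace CapProof

theorem IsCap.subset {s t : Finset V} (h : IsCap t) (hst : s ⊆ t) : IsCap s :=
  fun x hx y hy z hz => h x (hst hx) y (hst hy) z (hst hz)

theorem IsCap.map {s : Finset V} (h : IsCap s) (L : V ≃ₗ[ZMod 3] V) :
    IsCap (s.image (fun x => L x)) := by
  intro x hx y hy z hz hxy hxz hyz he
  simp only [Finset.mem_image] at hx hy hz
  obtain ⟨x, hx, rfl⟩ := hx
  obtain ⟨y, hy, rfl⟩ := hy
  obtain ⟨z, hz, rfl⟩ := hz
  refine h x hx y hy z hz (fun e => hxy (by rw [e])) (fun e => hxz (by rw [e]))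
    (fun e => hyz (by rw [e])) ?_
  apply L.injective
  rw [map_add, map_add, he, map_zero]

theorem three_smul_zero (w : V) : w + w + w = 0 := by
  funext i
  simp only [Pi.add_apply, Pi.zero_apply]
  generalize w i = t
  revert t
  decide

theorem IsCap.translate {s : Finset V} (h : IsCap s) (w : V) :
    IsCap (s.image (fun x => x + w)) := by
  intro x hx y hy z hz hxy hxz hyz he
  simp only [Finset.mem_image] at hx hy hz
  obtain ⟨x, hx, rfl⟩ := hx
  obtain ⟨y, hy, rfl⟩ := hy
  obtain ⟨z, hz, rfl⟩ := hz
  refine h x hx y hy z hz (fun e => hxy (by rw [e])) (fun e => hxz (by rw [e]))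
    (fun e => hyz (by rw [e])) ?_
  have := three_smul_zero w
  linear_combination he - this

theorem span_top (A : Finset V) (hA : IsCap A) (y : V) (hy : ∀ a ∈ A, y ⬝ᵥ a = 1)
    (h9 : 9 ≤ A.card) : Submodule.span (ZMod 3) (A : Set V) = ⊤ := by
  classical
  by_contra hne
  set W := Submodule.span (ZMod 3) (A : Set V) with hW
  have hlt : Module.finrank (ZMod 3) W < 4 := by
    have := Submodule.finrank_lt hne
    simpa using this
  have hcardW : Nat.card W ≤ 27 := by
    rw [Module.natCard_eq_pow_finrank (K := ZMod 3)]
    simp only [Nat.card_zmod]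
    calc 3 ^ Module.finrank (ZMod 3) W ≤ 3 ^ 3 := Nat.pow_le_pow_right (by norm_num) (by omega)
      _ = 27 := by norm_num
  obtain ⟨a, ha⟩ : A.Nonempty := Finset.card_pos.1 (by omega)
  set B := (A.erase a).image (fun b => -(a + b)) with hB
  have hBcard : B.card = A.card - 1 := by
    rw [hB, Finset.card_image_of_injective, Finset.card_erase_of_mem ha]
    intro b c h
    simpa using h
  have hdisj : Disjoint A B := by
    rw [Finset.disjoint_left]
    intro x hx hxB
    simp only [hB, Finset.mem_image, Finset.mem_erase] at hxB
    obtain ⟨b, ⟨hba, hb⟩, rfl⟩ := hxB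
    have t1 := three_smul_zero a
    have t2 := three_smul_zero b
    refine hA a ha b hb _ hx (Ne.symm hba) ?_ ?_ (by abel)
    · intro e
      apply hba
      linear_combination e - t1
    · intro e
      apply hba
      linear_combination -e + t2
  set X := A ∪ B with hX
  have hXcard : 17 ≤ X.card := by
    rw [hX, Finset.card_union_of_disjoint hdisj]; omega
  have hX1 : ∀ x ∈ X, x ∈ W ∧ y ⬝ᵥ x = 1 := by
    intro x hx
    rcases Finset.mem_union.1 hx with hx | hx
    · exact ⟨Submodule.subset_span hx, hy x hx⟩
    · simp only [hB, Finset.mem_image, Finset.mem_erase] at hx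
      obtain ⟨b, ⟨hba, hb⟩, rfl⟩ := hx
      refine ⟨W.neg_mem (W.add_mem (Submodule.subset_span ha) (Submodule.subset_span hb)), ?_⟩
      rw [dotProduct_neg, dotProduct_add, hy a ha, hy b hb]
      decide
  have hdisj2 : Disjoint X (X.image (fun x => -x)) := by
    rw [Finset.disjoint_left]
    intro x hx hx'
    obtain ⟨z, hz, rfl⟩ := Finset.mem_image.1 hx'
    have h1 := (hX1 _ hx).2
    rw [dotProduct_neg, (hX1 _ hz).2] at h1
    revert h1
    decide
  have hY : 34 ≤ (X ∪ X.image (fun x => -x)).card := by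
    rw [Finset.card_union_of_disjoint hdisj2, Finset.card_image_of_injective _ neg_injective]
    omega
  have hYW : ((X ∪ X.image (fun x => -x) : Finset V) : Set V) ⊆ (W : Set V) := by
    intro x hx
    rcases Finset.mem_union.1 (Finset.mem_coe.1 hx) with hx | hx
    · exact (hX1 x hx).1
    · obtain ⟨z, hz, rfl⟩ := Finset.mem_image.1 hx
      exact W.neg_mem (hX1 z hz).1
  have := Set.ncard_le_ncard hYW (Set.toFinite _)
  rw [Set.ncard_coe_finset] at this
  have h2 : (W : Set V).ncard = Nat.card W := rfl
  omega

theorem vec_eta (v : V) : v = ![v 0, v 1, v 2, v 3] := by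
  funext i
  fin_cases i <;> rfl

theorem exists_code (v : V) : ∃ n ∈ codes, dec n = v := by
  rw [vec_eta v]
  exact dec_codes _ _ _ _

theorem dec_basis : dec 1 = Pi.single 0 1 ∧ dec 8 = Pi.single 1 1 ∧ dec 64 = Pi.single 2 1 ∧
    dec 512 = Pi.single 3 1 := by
  decide +kernel

theorem basis_case (A : Finset V) (hA : IsCap A) (h1 : ∀ a ∈ A, a 0 + a 1 + a 2 + a 3 = 1)
    (he : ∀ i : Fin 4, Pi.single i 1 ∈ A) (h9 : 9 ≤ A.card) :
    ∃ L : V ≃ₗ[ZMod 3] V, ∀ a ∈ A, inA (L a) = true := by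
  obtain ⟨d0, d1, d2, d3⟩ := dec_basis
  have m0 : dec 1 ∈ A := by rw [d0]; exact he 0
  have m1 : dec 8 ∈ A := by rw [d1]; exact he 1
  have m2 : dec 64 ∈ A := by rw [d2]; exact he 2
  have m3 : dec 512 ∈ A := by rw [d3]; exact he 3
  have k0 : Cov A (codes1 ++ [1]) := by
    intro x hx
    obtain ⟨n, hn, rfl⟩ := exists_code x
    refine ⟨n, List.mem_append_left _ ?_, rfl⟩
    unfold codes1
    simp only [List.mem_filter, beq_iff_eq]
    exact ⟨hn, h1 _ hx⟩
  have grow : ∀ (l l' : List ℕ) (c : ℕ), Cov A (l ++ l') → Cov A (l ++ c :: l') := by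
    intro l l' c h x hx
    obtain ⟨d, hd, rfl⟩ := h x hx
    refine ⟨d, ?_, rfl⟩
    simp only [List.mem_append, List.mem_cons] at hd ⊢
    tauto
  have k1 : Cov A (c1 ++ [1]) := Cov.push hA m0 (by simp) k0
  have k2 : Cov A (c2 ++ [8, 1]) := Cov.push hA m1 (by simp [m0]) (grow _ _ _ k1)
  have k3 : Cov A (c3 ++ [64, 8, 1]) := Cov.push hA m2 (by simp [m0, m1]) (grow _ _ _ k2)
  have k4 : Cov A (c4 ++ [512, 64, 8, 1]) :=
    Cov.push hA m3 (by simp [m0, m1, m2]) (grow _ _ _ k3)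
  obtain ⟨l, hl, hcov⟩ := search_sound leafA A hA h9 40 c4 _ searchA
    (by simp [m0, m1, m2, m3]) k4
  unfold leafA at hl
  obtain ⟨p, hp, hpl⟩ := List.any_eq_true.1 hl
  have hinj : Function.Injective (mat p).mulVecLin := by
    rw [← LinearMap.ker_eq_bot, LinearMap.ker_eq_bot']
    intro v hv
    exact mat_inj p hp v hv
  refine ⟨LinearEquiv.ofInjectiveEndo _ hinj, ?_⟩
  intro a ha
  obtain ⟨c, hc, rfl⟩ := hcov a ha
  exact List.all_eq_true.1 hpl c hc

theorem nine_cap (A : Finset V) (hA : IsCap A) (y : V) (hy : ∀ a ∈ A, y ⬝ᵥ a = 1)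
    (h9 : 9 ≤ A.card) : ∃ L : V ≃ₗ[ZMod 3] V, ∀ a ∈ A, inA (L a) = true := by
  have hspan := span_top A hA y hy h9
  obtain ⟨f, hf, hfs, hfi⟩ := Submodule.exists_fun_fin_finrank_span_eq (ZMod 3) (A : Set V)
  have hr : Module.finrank (ZMod 3) (Submodule.span (ZMod 3) (A : Set V)) = 4 := by
    rw [hspan]; simp
  replace hfs := hfs.trans hspan
  revert f
  rw [hr]
  intro f hf hfi hfs
  let b : Module.Basis (Fin 4) (ZMod 3) V := Module.Basis.mk hfi (by rw [hfs])
  have hb : ∀ i, b i = f i := fun i => by simp [b]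
  let E : V ≃ₗ[ZMod 3] V := b.equivFun
  have hE : ∀ i, E (f i) = Pi.single i 1 := by
    intro i
    rw [← hb i]
    funext j
    simp [E, Pi.single_apply, eq_comm]
  have key : ∃ L : V ≃ₗ[ZMod 3] V, ∀ a ∈ A.image (fun x => E x), inA (L a) = true := by
    refine basis_case (A.image (fun x => E x)) (IsCap.map hA E) ?_ ?_ ?_
    · intro x hx
      obtain ⟨a, ha, rfl⟩ := Finset.mem_image.1 hx
      have h1 := hy a ha
      rw [← b.sum_equivFun a] at h1
      rw [dotProduct_sum] at h1
      simp only [dotProduct_smul, hb, hy _ (hf _), Fin.sum_univ_four, smul_eq_mul, mul_one] at h1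
      exact h1
    · intro i
      rw [← hE i]
      exact Finset.mem_image_of_mem _ (hf i)
    · rw [Finset.card_image_of_injective _ E.injective]
      exact h9
  obtain ⟨L, hL⟩ := key
  refine ⟨E.trans L, ?_⟩
  intro a ha
  exact hL _ (Finset.mem_image_of_mem _ ha)

/-- The standard 9-cap. -/
def A0 : Finset V := Finset.univ.filter (fun v => inA v = true)

theorem A0_sum_card : A0.card = 9 ∧ ∑ x ∈ A0, x = 0 := by
  decide +kernel

theorem level_le (S : Finset V) (hS : IsCap S) (y : V) (hy : y ≠ 0) (i : ZMod 3) :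
    (S.filter (fun x => y ⬝ᵥ x = i)).card ≤ 9 := by
  by_contra hlt
  push Not at hlt
  obtain ⟨j, hj⟩ : ∃ j, y j ≠ 0 := by
    by_contra h
    push Not at h
    exact hy (funext h)
  let w : V := Pi.single j ((1 - i) * (y j)⁻¹)
  have hw : y ⬝ᵥ w = 1 - i := by
    simp only [w, dotProduct_single]
    field_simp
  set T := (S.filter (fun x => y ⬝ᵥ x = i)).image (fun x => x + w) with hT
  have hTc : T.card = (S.filter (fun x => y ⬝ᵥ x = i)).card :=
    Finset.card_image_of_injective _ (add_left_injective w)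
  obtain ⟨L, hL⟩ := nine_cap T (IsCap.translate (IsCap.subset hS (Finset.filter_subset _ _)) w) y
    (by
      intro a ha
      obtain ⟨x, hx, rfl⟩ := Finset.mem_image.1 ha
      rw [dotProduct_add, hw, (Finset.mem_filter.1 hx).2]
      ring) (by omega)
  have hsub : T.image (fun x => L x) ⊆ A0 := by
    intro x hx
    obtain ⟨a, ha, rfl⟩ := Finset.mem_image.1 hx
    simp [A0, hL a ha]
  have := Finset.card_le_card hsub
  rw [Finset.card_image_of_injective _ L.injective, A0_sum_card.1] at this
  omega

end CapProof

namespace CapProof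

theorem dual_count_aux : ∀ a b c d : ZMod 3, ![a, b, c, d] = (0 : V) ∨
    (∑ y : V, if y ⬝ᵥ ![a, b, c, d] = 0 then (1 : ℤ) else 0) = 27 := by
  decide +kernel

theorem dual_count (v : V) :
    (∑ y : V, if y ⬝ᵥ v = 0 then (1 : ℤ) else 0) = 27 + 54 * (if v = 0 then 1 else 0) := by
  by_cases hv : v = 0
  · subst hv
    simp
  · rw [if_neg hv]
    have := dual_count_aux (v 0) (v 1) (v 2) (v 3)
    rw [← vec_eta v] at this
    simpa using this.resolve_left hv

theorem four_dirs : ∀ a b : ZMod 3,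
    3 * (if a = 0 ∧ b = 0 then (1 : ℤ) else 0) = (if a = 0 then 1 else 0) +
      (if b = 0 then 1 else 0) + (if a + b = 0 then 1 else 0) + (if a - b = 0 then 1 else 0) - 1 := by
  decide

theorem dual_count2 (u v : V) :
    3 * (∑ y : V, if y ⬝ᵥ u = 0 ∧ y ⬝ᵥ v = 0 then (1 : ℤ) else 0) =
      27 + 54 * ((if u = 0 then 1 else 0) + (if v = 0 then 1 else 0) +
        (if u + v = 0 then 1 else 0) + (if u - v = 0 then 1 else 0)) := by
  rw [Finset.mul_sum]
  simp only [four_dirs, ← dotProduct_add, ← dotProduct_sub, Finset.sum_add_distrib,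
    Finset.sum_sub_distrib, dual_count]
  have : (∑ y : V, (1 : ℤ)) = 81 := by simp
  rw [this]
  ring

/-- Indicator of equality. -/
def ind {α : Type} [DecidableEq α] (a b : α) : ℤ := if a = b then 1 else 0

theorem pair_count (a b : V) :
    (∑ y : V, ind (y ⬝ᵥ a) (y ⬝ᵥ b)) = 27 + 54 * ind a b := by
  have := dual_count (a - b)
  simp only [dotProduct_sub, sub_eq_zero] at this
  exact this

theorem triple_count (U : Finset V) (hU : IsCap U) (a b c : V) (ha : a ∈ U) (hb : b ∈ U)
    (hc : c ∈ U) :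
    (∑ y : V, ind (y ⬝ᵥ a) (y ⬝ᵥ b) * ind (y ⬝ᵥ a) (y ⬝ᵥ c)) =
      9 + 18 * (ind a b + ind a c + ind b c) + 18 * (ind a b * ind a c) := by
  have h := dual_count2 (a - b) (a - c)
  have e : ∀ y : V, (if y ⬝ᵥ (a - b) = 0 ∧ y ⬝ᵥ (a - c) = 0 then (1 : ℤ) else 0) =
      ind (y ⬝ᵥ a) (y ⬝ᵥ b) * ind (y ⬝ᵥ a) (y ⬝ᵥ c) := by
    intro y
    simp only [dotProduct_sub, sub_eq_zero, ind]
    split_ifs <;> simp_all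
  simp only [e] at h
  have e3 : a - b - (a - c) = 0 ↔ b = c := by
    constructor
    · intro h; linear_combination -h
    · rintro rfl; abel
  have e4 : a - b + (a - c) = 0 ↔ a + b + c = 0 := by
    have := three_smul_zero a
    constructor
    · intro h; linear_combination this - h
    · intro h; linear_combination this - h
  simp only [e3, e4, sub_eq_zero] at h
  have e5 : (if a + b + c = 0 then (1 : ℤ) else 0) = ind a b * ind a c := by
    unfold ind
    by_cases hab : a = b
    · subst hab
      by_cases hac : a = c
      · subst hac
        simp [three_smul_zero]
      · have : ¬ (a + a + c = 0) := by
          intro h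
          apply hac
          linear_combination three_smul_zero a - h
        simp [hac, this]
    · by_cases hac : a = c
      · subst hac
        have : ¬ (a + b + a = 0) := by
          intro h
          apply hab
          linear_combination three_smul_zero a - h
        simp [hab, this]
      · by_cases hbc : b = c
        · subst hbc
          have : ¬ (a + b + b = 0) := by
            intro h
            apply hab
            linear_combination -three_smul_zero b + h
          simp [hab, this]
        · simp [hab, hU a ha b hb c hc hab hac hbc]
  rw [e5] at h
  unfold ind at *
  linarith

/-- Number of points on a level of a linear functional. -/
def lev (U : Finset V) (y : V) (i : ZMod 3) : ℕ := (U.filter (fun x => y ⬝ᵥ x = i)).card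

theorem lev_eq (U : Finset V) (y : V) (i : ZMod 3) :
    (lev U y i : ℤ) = ∑ x ∈ U, ind (y ⬝ᵥ x) i := by
  simp [lev, ind]

theorem sum_ind2 : ∀ a b : ZMod 3, ∑ i : ZMod 3, ind a i * ind b i = ind a b := by
  decide

theorem sum_ind3 : ∀ a b c : ZMod 3, ∑ i : ZMod 3, ind a i * ind b i * ind c i =
    ind a b * ind a c := by
  decide

theorem moment1 (U : Finset V) (y : V) : ∑ i : ZMod 3, lev U y i = U.card := by
  unfold lev
  exact (Finset.card_eq_sum_card_fiberwise (f := fun x => y ⬝ᵥ x) (t := Finset.univ)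
    (by intro x _; simp)).symm

theorem moment2 (U : Finset V) (y : V) : ∑ i : ZMod 3, (lev U y i : ℤ) ^ 2 =
    ∑ a ∈ U, ∑ b ∈ U, ind (y ⬝ᵥ a) (y ⬝ᵥ b) := by
  simp only [lev_eq, pow_two, Finset.sum_mul_sum]
  rw [Finset.sum_comm]
  refine Finset.sum_congr rfl fun a _ => ?_
  rw [Finset.sum_comm]
  exact Finset.sum_congr rfl fun b _ => sum_ind2 _ _

theorem moment3 (U : Finset V) (y : V) : ∑ i : ZMod 3, (lev U y i : ℤ) ^ 3 =
    ∑ a ∈ U, ∑ b ∈ U, ∑ c ∈ U, ind (y ⬝ᵥ a) (y ⬝ᵥ b) * ind (y ⬝ᵥ a) (y ⬝ᵥ c) := by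
  simp only [lev_eq, pow_succ, pow_zero, one_mul, Finset.sum_mul_sum]
  simp only [Finset.sum_mul]
  rw [Finset.sum_comm]
  refine Finset.sum_congr rfl fun a _ => ?_
  rw [Finset.sum_comm]
  refine Finset.sum_congr rfl fun b _ => ?_
  rw [Finset.sum_comm]
  exact Finset.sum_congr rfl fun c _ => (sum_ind3 _ _ _).trans (mul_comm _ _)

theorem sum_ind_self (U : Finset V) (a : V) (ha : a ∈ U) : ∑ b ∈ U, ind a b = 1 := by
  simp [ind, ha]

theorem total2 (U : Finset V) : ∑ y : V, ∑ i : ZMod 3, (lev U y i : ℤ) ^ 2 =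
    27 * (U.card : ℤ) ^ 2 + 54 * U.card := by
  simp only [moment2]
  rw [Finset.sum_comm]
  have : ∀ a ∈ U, ∑ y : V, ∑ b ∈ U, ind (y ⬝ᵥ a) (y ⬝ᵥ b) = 27 * (U.card : ℤ) + 54 := by
    intro a ha
    rw [Finset.sum_comm]
    simp only [pair_count, Finset.sum_add_distrib, ← Finset.mul_sum, sum_ind_self U a ha]
    simp; ring
  rw [Finset.sum_congr rfl this]
  simp; ring

theorem total3 (U : Finset V) (hU : IsCap U) : ∑ y : V, ∑ i : ZMod 3, (lev U y i : ℤ) ^ 3 =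
    9 * (U.card : ℤ) ^ 3 + 54 * (U.card : ℤ) ^ 2 + 18 * U.card := by
  simp only [moment3]
  rw [Finset.sum_comm]
  have : ∀ a ∈ U, ∑ y : V, ∑ b ∈ U, ∑ c ∈ U,
      ind (y ⬝ᵥ a) (y ⬝ᵥ b) * ind (y ⬝ᵥ a) (y ⬝ᵥ c) =
      9 * (U.card : ℤ) ^ 2 + 54 * (U.card : ℤ) + 18 := by
    intro a ha
    rw [Finset.sum_comm]
    have h1 : ∀ b ∈ U, ∑ y : V, ∑ c ∈ U,
        ind (y ⬝ᵥ a) (y ⬝ᵥ b) * ind (y ⬝ᵥ a) (y ⬝ᵥ c) =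
        9 * (U.card : ℤ) + 18 * (ind a b * U.card + 2) + 18 * ind a b := by
      intro b hb
      rw [Finset.sum_comm]
      rw [Finset.sum_congr rfl fun c hc => triple_count U hU a b c ha hb hc]
      simp only [Finset.sum_add_distrib, ← Finset.mul_sum, sum_ind_self U a ha,
        sum_ind_self U b hb]
      simp; ring
    rw [Finset.sum_congr rfl h1]
    simp only [Finset.sum_add_distrib, ← Finset.mul_sum, ← Finset.sum_mul, sum_ind_self U a ha]
    simp; ring
  rw [Finset.sum_congr rfl this]
  simp; ring

theorem triples_check_fin : ∀ a b c : Fin 10, a.val + b.val + c.val = 20 →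
    (a.val = 2 ∧ b.val = 9 ∧ c.val = 9) ∨ (a.val = 9 ∧ b.val = 2 ∧ c.val = 9) ∨
    (a.val = 9 ∧ b.val = 9 ∧ c.val = 2) ∨
    184 * (a.val ^ 2 + b.val ^ 2 + c.val ^ 2) <
      10 * (a.val ^ 3 + b.val ^ 3 + c.val ^ 3) + 15659 := by
  decide +kernel

theorem triples_check (a : ℕ) (ha : a < 10) (b : ℕ) (hb : b < 10) (c : ℕ) (hc : c < 10)
    (h : a + b + c = 20) :
    (a = 2 ∧ b = 9 ∧ c = 9) ∨ (a = 9 ∧ b = 2 ∧ c = 9) ∨ (a = 9 ∧ b = 9 ∧ c = 2) ∨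
    184 * (a ^ 2 + b ^ 2 + c ^ 2) < 10 * (a ^ 3 + b ^ 3 + c ^ 3) + 15659 :=
  triples_check_fin ⟨a, ha⟩ ⟨b, hb⟩ ⟨c, hc⟩ h

theorem sum_zmod3 {M : Type} [AddCommMonoid M] (f : ZMod 3 → M) :
    ∑ i, f i = f 0 + f 1 + f 2 := Fin.sum_univ_three f

theorem exists_992 (U : Finset V) (hU : IsCap U) (h20 : U.card = 20) :
    ∃ y : V, y ≠ 0 ∧ ∃ i : ZMod 3, ∀ j : ZMod 3, j ≠ i → lev U y j = 9 := by
  by_contra hno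
  have hpos : ∀ y ∈ (Finset.univ.erase (0 : V)), (0 : ℤ) <
      10 * (∑ i : ZMod 3, (lev U y i : ℤ) ^ 3) - 184 * (∑ i : ZMod 3, (lev U y i : ℤ) ^ 2)
        + 15659 := by
    intro y hy
    have hy0 : y ≠ 0 := (Finset.mem_erase.1 hy).1
    have hle : ∀ i, lev U y i < 10 := fun i => Nat.lt_succ_of_le (level_le U hU y hy0 i)
    have hsum := moment1 U y
    rw [h20, sum_zmod3] at hsum
    rcases triples_check _ (hle 0) _ (hle 1) _ (hle 2) hsum with h | h | h | h
    · refine absurd ⟨y, hy0, 0, ?_⟩ hno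
      intro j hj
      fin_cases j
      · exact absurd rfl hj
      · exact h.2.1
      · exact h.2.2
    · refine absurd ⟨y, hy0, 1, ?_⟩ hno
      intro j hj
      fin_cases j
      · exact h.1
      · exact absurd rfl hj
      · exact h.2.2
    · refine absurd ⟨y, hy0, 2, ?_⟩ hno
      intro j hj
      fin_cases j
      · exact h.1
      · exact h.2.1
      · exact absurd rfl hj
    · rw [sum_zmod3, sum_zmod3]
      zify at h
      linarith
  have hs := Finset.sum_pos hpos ⟨Pi.single 0 1, by simp⟩
  have t2 := total2 U
  have t3 := total3 U hU
  rw [h20] at t2 t3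
  rw [← Finset.add_sum_erase _ _ (Finset.mem_univ (0 : V))] at t2 t3
  have l0 : lev U 0 0 = 20 := by simp [lev, h20]
  have l1 : lev U 0 1 = 0 := by simp [lev]
  have l2 : lev U 0 2 = 0 := by
    have : ¬ ((0 : ZMod 3) = 2) := by decide
    simp [lev, this]
  simp only [sum_zmod3 (fun i => (lev U 0 i : ℤ) ^ 2), l0, l1, l2] at t2
  simp only [sum_zmod3 (fun i => (lev U 0 i : ℤ) ^ 3), l0, l1, l2] at t3
  rw [Finset.sum_add_distrib, Finset.sum_sub_distrib, ← Finset.mul_sum, ← Finset.mul_sum] at hs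
  have hc : (Finset.univ.erase (0 : V)).card = 80 := by
    rw [Finset.card_erase_of_mem (Finset.mem_univ _)]; simp
  rw [Finset.sum_const, hc] at hs
  norm_num at t2 t3 hs
  linarith

end CapProof

namespace CapProof

theorem par_decomp_aux : ∀ a b c d : ZMod 3, (![a, b, c, d] : V) =
    (a - d) • par 0 0 + (-(b + d - c)) • par 1 0 + (-(b + d - c) - b) • par 2 0 + c • par 0 1 := by
  decide +kernel

theorem par_inA : ∀ x y : ZMod 3, inA (par x y) = true := by
  decide

theorem functional_eq (f : V →ₗ[ZMod 3] ZMod 3) (hf : ∀ v, inA v = true → f v = 1) (v : V) :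
    f v = v 0 := by
  conv_lhs => rw [vec_eta v, par_decomp_aux]
  simp only [map_add, map_smul, hf _ (par_inA _ _), smul_eq_mul]
  generalize v 0 = a
  generalize v 1 = b
  generalize v 2 = c
  generalize v 3 = d
  revert a b c d
  decide

theorem main_struct (S : Finset V) (hS : IsCap S) (y : V) (h1 : 9 ≤ lev S y 1)
    (h2 : 9 ≤ lev S y 2) :
    ∃ L : V ≃ₗ[ZMod 3] V, (∀ a ∈ S, y ⬝ᵥ a = 1 → inA (L a) = true) ∧
      (∀ x, (L x) 0 = y ⬝ᵥ x) ∧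
      ∀ p ∈ S, ∀ q ∈ S, p ≠ q → y ⬝ᵥ p = 0 → y ⬝ᵥ q = 0 →
        ((L q - L p) 0 = 0 ∧ (L q - L p) 1 = 0 ∧ (L q - L p) 2 = 0) ∧
        ∀ b ∈ S, y ⬝ᵥ b = 2 → inA (L p + L q - L b) = true := by
  set A := S.filter (fun x => y ⬝ᵥ x = 1) with hAdef
  obtain ⟨L, hL⟩ := nine_cap A (IsCap.subset hS (Finset.filter_subset _ _)) y
    (fun a ha => (Finset.mem_filter.1 ha).2) h1
  have himg : A.image (fun x => L x) = A0 := by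
    apply Finset.eq_of_subset_of_card_le
    · intro x hx
      obtain ⟨a, ha, rfl⟩ := Finset.mem_image.1 hx
      simp [A0, hL a ha]
    · rw [Finset.card_image_of_injective _ L.injective, A0_sum_card.1]
      exact h1
  have hpre : ∀ v, inA v = true → ∃ a ∈ S, y ⬝ᵥ a = 1 ∧ L a = v := by
    intro v hv
    have : v ∈ A.image (fun x => L x) := by rw [himg]; simp [A0, hv]
    obtain ⟨a, ha, rfl⟩ := Finset.mem_image.1 this
    exact ⟨a, (Finset.mem_filter.1 ha).1, (Finset.mem_filter.1 ha).2, rfl⟩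
  have hlev : ∀ x, (L x) 0 = y ⬝ᵥ x := by
    intro x
    let f : V →ₗ[ZMod 3] ZMod 3 := (dotProductBilin (ZMod 3) (ZMod 3) y).comp L.symm.toLinearMap
    have hf : ∀ v, f v = y ⬝ᵥ (L.symm v) := fun v => rfl
    have := functional_eq f (by
      intro v hv
      obtain ⟨a, _, ha, rfl⟩ := hpre v hv
      rw [hf]; simpa using ha) (L x)
    rw [← this, hf]
    simp
  refine ⟨L, ?_, hlev, ?_⟩
  · intro a ha hy
    exact hL a (Finset.mem_filter.2 ⟨ha, hy⟩)
  intro p hp q hq hpq hyp hyq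
  set d := L q - L p with hd
  have hd0 : d 0 = 0 := by
    rw [hd, Pi.sub_apply, hlev, hlev, hyp, hyq, sub_zero]
  have hdne : d ≠ 0 := by
    intro h
    apply hpq
    apply L.injective
    exact (sub_eq_zero.1 h).symm
  set B := S.filter (fun x => y ⬝ᵥ x = 2) with hBdef
  set B' := (B.image (fun x => L x)).image (fun x => x + (-(L p) - L q)) with hB'
  have hB'cap : IsCap B' :=
    IsCap.translate (IsCap.map (IsCap.subset hS (Finset.filter_subset _ _)) L) _
  have hB'card : 9 ≤ B'.card := by
    rw [hB', Finset.card_image_of_injective _ (add_left_injective _),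
      Finset.card_image_of_injective _ L.injective]
    exact h2
  have hmem : ∀ b ∈ S, y ⬝ᵥ b = 2 → L b + (-(L p) - L q) ∈ B' := by
    intro b hb hyb
    exact Finset.mem_image_of_mem _ (Finset.mem_image_of_mem (fun x => L x)
      (Finset.mem_filter.2 ⟨hb, hyb⟩))
  have havoid : ∀ b ∈ S, y ⬝ᵥ b = 2 → ∀ r ∈ S, y ⬝ᵥ r = 0 → inA (-(L b) - L r) = false := by
    intro b hb hyb r hr hyr
    by_contra hne
    rw [Bool.not_eq_false] at hne
    obtain ⟨a, ha, hya, hae⟩ := hpre _ hne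
    refine hS a ha b hb r hr ?_ ?_ ?_ ?_
    · rintro rfl
      rw [hya] at hyb; revert hyb; decide
    · rintro rfl
      rw [hya] at hyr; revert hyr; decide
    · rintro rfl
      rw [hyb] at hyr; revert hyr; decide
    · apply L.injective
      rw [map_add, map_add, hae, map_zero]
      abel
  have hcov : Cov B' (candB d ++ []) := by
    intro x hx
    obtain ⟨n, hn, hnx⟩ := exists_code x
    refine ⟨n, ?_, hnx⟩
    obtain ⟨x', hx', rfl⟩ := Finset.mem_image.1 hx
    obtain ⟨b, hb, rfl⟩ := Finset.mem_image.1 hx'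
    obtain ⟨hbS, hyb⟩ := Finset.mem_filter.1 hb
    rw [List.append_nil]
    unfold candB
    rw [List.mem_filter]
    refine ⟨hn, ?_⟩
    rw [hnx]
    have t1 := three_smul_zero (L p)
    have t2 := three_smul_zero (L q)
    have e1 : -(L b + (-(L p) - L q)) + d = -(L b) - L q := by
      rw [hd]; linear_combination t2
    have e2 : -(L b + (-(L p) - L q)) - d = -(L b) - L p := by
      rw [hd]; linear_combination t1
    simp only [e1, e2, havoid b hbS hyb q hq hyq, havoid b hbS hyb p hp hyp]
    simp [hlev, hyb, hyp, hyq]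
  have hdv : d = ![0, d 1, d 2, d 3] := by
    conv_lhs => rw [vec_eta d, hd0]
  have hxy : d 1 = 0 ∧ d 2 = 0 := by
    rcases searchB (d 1) (d 2) (d 3) with h | h
    · exact h
    · rw [← hdv] at h
      obtain ⟨l, hl, _⟩ := search_sound _ B' hB'cap hB'card 40 _ _ h (by simp) hcov
      exact absurd hl (by simp)
  refine ⟨⟨hd0, hxy.1, hxy.2⟩, ?_⟩
  intro b hb hyb
  obtain ⟨n, hn, hnx⟩ := hcov _ (hmem b hb hyb)
  rw [List.append_nil] at hn
  rw [hxy.1, hxy.2] at hdv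
  have hz : d 3 ≠ 0 := by
    intro h
    apply hdne
    rw [hdv, h]
    decide
  rw [hdv] at hn
  have := candB_vert _ hz n hn
  rw [hnx] at this
  convert this using 2
  abel

/-- Membership in the standard 20-cap. -/
def inS (v : V) : Bool :=
  inA v || inA (-v) || (v 0 == 0 && v 1 == 0 && v 2 == 0 && !(v 3 == 0))

/-- The standard 20-cap. -/
def S0 : Finset V := Finset.univ.filter (fun v => inS v = true)

theorem S0_card : S0.card = 20 := by
  decide +kernel

/-- Codes of the points of the standard cap. -/
def codesS : List ℕ := codes.filter (fun n => inS (dec n))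

theorem codesS_cap : (codesS.all fun a => codesS.all fun b => a == b ||
    (codesS.all fun c => !(c == third a b) || c == a || c == b)) = true := by
  decide +kernel

theorem third_mem_codes : (codes.all fun a => codes.all fun b => codes.contains (third a b)) = true := by
  decide +kernel

theorem S0_cap : IsCap S0 := by
  intro x hx y hy z hz hxy hxz hyz he
  obtain ⟨a, ha, rfl⟩ := exists_code x
  obtain ⟨b, hb, rfl⟩ := exists_code y
  have hc : third a b ∈ codes := by
    have := List.all_eq_true.1 (List.all_eq_true.1 third_mem_codes a ha) b hb
    simpa using this
  have hz' : z = dec (third a b) := by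
    rw [dec_third]; linear_combination he
  subst hz'
  have mem : ∀ n ∈ codes, dec n ∈ S0 → n ∈ codesS := by
    intro n hn h
    simp only [S0, Finset.mem_filter] at h
    simp only [codesS, List.mem_filter]
    exact ⟨hn, h.2⟩
  have := List.all_eq_true.1 (List.all_eq_true.1 codesS_cap a (mem a ha hx)) b (mem b hb hy)
  rw [Bool.or_eq_true] at this
  rcases this with h | h
  · exact hxy (by rw [eq_of_beq h])
  · have h2 := List.all_eq_true.1 h _ (mem _ hc hz)
    simp only [beq_self_eq_true, Bool.not_true, Bool.false_or, Bool.or_eq_true, beq_iff_eq] at h2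
    rcases h2 with h2 | h2
    · exact hxz (by rw [h2])
    · exact hyz (by rw [h2])

theorem exists_trans (y : V) (hy : y ≠ 0) (i : ZMod 3) : ∃ w : V, y ⬝ᵥ w = i := by
  obtain ⟨j, hj⟩ : ∃ j, y j ≠ 0 := by
    by_contra h
    push Not at h
    exact hy (funext h)
  refine ⟨Pi.single j (i * (y j)⁻¹), ?_⟩
  simp only [dotProduct_single]
  field_simp

theorem lev_translate (S : Finset V) (y w : V) (i : ZMod 3) :
    lev (S.image (fun x => x + w)) y i = lev S y (i - y ⬝ᵥ w) := by
  unfold lev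
  rw [Finset.filter_image, Finset.card_image_of_injective _ (add_left_injective w)]
  congr 1
  ext x
  simp [dotProduct_add, eq_sub_iff_add_eq]

theorem mid_le (S : Finset V) (hS : IsCap S) (y : V) (h1 : 9 ≤ lev S y 1)
    (h2 : 9 ≤ lev S y 2) : lev S y 0 ≤ 2 := by
  obtain ⟨L, -, -, hL⟩ := main_struct S hS y h1 h2
  by_contra hlt
  push Not at hlt
  unfold lev at hlt
  obtain ⟨p, q, r, hp, hq, hr, hpq, hpr, hqr⟩ := Finset.two_lt_card_iff.1 hlt
  rw [Finset.mem_filter] at hp hq hr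
  obtain ⟨⟨a0, a1, a2⟩, -⟩ := hL p hp.1 q hq.1 hpq hp.2 hq.2
  obtain ⟨⟨b0, b1, b2⟩, -⟩ := hL p hp.1 r hr.1 hpr hp.2 hr.2
  refine hS p hp.1 q hq.1 r hr.1 hpq hpr hqr ?_
  apply L.injective
  rw [map_zero, map_add, map_add]
  have n1 : L p ≠ L q := fun h => hpq (L.injective h)
  have n2 : L p ≠ L r := fun h => hpr (L.injective h)
  have n3 : L q ≠ L r := fun h => hqr (L.injective h)
  generalize L p = P at *
  generalize L q = Q at *
  generalize L r = R at *
  simp only [Pi.sub_apply, sub_eq_zero] at a0 a1 a2 b0 b1 b2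
  have ext4 : ∀ X Y : V, X 0 = Y 0 → X 1 = Y 1 → X 2 = Y 2 → X 3 = Y 3 → X = Y := by
    intro X Y h0 h1 h2 h3
    funext i
    fin_cases i <;> assumption
  have m1 : P 3 ≠ Q 3 := fun h => n1 (ext4 _ _ a0.symm a1.symm a2.symm h)
  have m2 : P 3 ≠ R 3 := fun h => n2 (ext4 _ _ b0.symm b1.symm b2.symm h)
  have m3 : Q 3 ≠ R 3 := fun h => n3 (ext4 _ _ (a0.trans b0.symm) (a1.trans b1.symm)
    (a2.trans b2.symm) h)
  have t3 : ∀ t : ZMod 3, t + t + t = 0 := by decide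
  have u3 : ∀ a b c : ZMod 3, a ≠ b → a ≠ c → b ≠ c → a + b + c = 0 := by decide
  apply ext4
  · simp [a0, b0, t3]
  · simp [a1, b1, t3]
  · simp [a2, b2, t3]
  · simp [u3 _ _ _ m1 m2 m3]

theorem classify (S : Finset V) (hS : IsCap S) (h20 : 20 ≤ S.card) (hsum : ∑ x ∈ S, x = 0) :
    ∃ L : V ≃ₗ[ZMod 3] V, S.image (fun x => L x) = S0 := by
  obtain ⟨U, hUS, hUc⟩ := Finset.exists_subset_card_eq h20
  obtain ⟨y, hy, i, hi⟩ := exists_992 U (IsCap.subset hS hUS) hUc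
  have h9 : ∀ j, j ≠ i → lev S y j = 9 := by
    intro j hj
    apply le_antisymm (level_le S hS y hy j)
    rw [← hi j hj]
    exact Finset.card_le_card (Finset.filter_subset_filter _ hUS)
  have sh1 : ∀ i : ZMod 3, 1 - -i ≠ i := by decide
  have sh2 : ∀ i : ZMod 3, 2 - -i ≠ i := by decide
  have hmid : lev S y i ≤ 2 := by
    obtain ⟨w, hw⟩ := exists_trans y hy (-i)
    have := mid_le (S.image (fun x => x + w)) (IsCap.translate hS w) y
      (by rw [lev_translate, hw, h9 _ (sh1 i)]) (by rw [lev_translate, hw, h9 _ (sh2 i)])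
    rw [lev_translate, hw] at this
    simpa using this
  have hm := moment1 S y
  rw [← Finset.add_sum_erase _ _ (Finset.mem_univ i), Finset.sum_congr rfl
    (fun j hj => h9 j (Finset.mem_erase.1 hj).1), Finset.sum_const,
    Finset.card_erase_of_mem (Finset.mem_univ i)] at hm
  simp at hm
  have hi2 : lev S y i = 2 := by omega
  have hScard : S.card = 20 := by omega
  have hi0 : i = 0 := by
    have h0 : y ⬝ᵥ (∑ x ∈ S, x) = 0 := by rw [hsum, dotProduct_zero]
    rw [dotProduct_sum, ← Finset.sum_fiberwise_of_maps_to (t := Finset.univ)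
      (g := fun x => y ⬝ᵥ x) (by simp)] at h0
    have h3 : ∀ j : ZMod 3, ∑ x ∈ S with y ⬝ᵥ x = j, y ⬝ᵥ x = (lev S y j : ZMod 3) * j := by
      intro j
      rw [Finset.sum_congr rfl (fun x hx => (Finset.mem_filter.1 hx).2), Finset.sum_const,
        nsmul_eq_mul]
      rfl
    simp only [h3] at h0
    rw [← Finset.add_sum_erase _ _ (Finset.mem_univ i), Finset.sum_eq_zero, hi2] at h0
    · revert h0
      generalize i = t
      revert t
      decide
    · intro j hj
      rw [h9 j (Finset.mem_erase.1 hj).1]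
      have : ((9 : ℕ) : ZMod 3) = 0 := by decide
      rw [this, zero_mul]
  subst hi0
  have l1 := h9 1 (by decide)
  have l2 := h9 2 (by decide)
  obtain ⟨L, hL1, hL0, hL2⟩ := main_struct S hS y l1.ge l2.ge
  obtain ⟨p, q, hpq, hM⟩ := Finset.card_eq_two.1 hi2
  have hpM : p ∈ S.filter (fun x => y ⬝ᵥ x = 0) := by rw [hM]; simp
  have hqM : q ∈ S.filter (fun x => y ⬝ᵥ x = 0) := by rw [hM]; simp
  rw [Finset.mem_filter] at hpM hqM
  obtain ⟨⟨d0, d1, d2⟩, hB⟩ := hL2 p hpM.1 q hqM.1 hpq hpM.2 hqM.2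
  -- the sums over the two outer levels
  have sA : ∑ x ∈ S with y ⬝ᵥ x = 1, L x = 0 := by
    have himg : (S.filter (fun x => y ⬝ᵥ x = 1)).image (fun x => L x) = A0 := by
      apply Finset.eq_of_subset_of_card_le
      · intro x hx
        obtain ⟨a, ha, rfl⟩ := Finset.mem_image.1 hx
        rw [Finset.mem_filter] at ha
        simp [A0, hL1 a ha.1 ha.2]
      · rw [Finset.card_image_of_injective _ L.injective, A0_sum_card.1]
        exact l1.ge
    have := A0_sum_card.2
    rw [← himg, Finset.sum_image (fun _ _ _ _ h => L.injective h)] at this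
    exact this
  have sB : ∑ x ∈ S with y ⬝ᵥ x = 2, (L p + L q - L x) = 0 := by
    have hinj : Function.Injective (fun x => L p + L q - L x) := by
      intro a b h
      apply L.injective
      simpa using h
    have himg : (S.filter (fun x => y ⬝ᵥ x = 2)).image (fun x => L p + L q - L x) = A0 := by
      apply Finset.eq_of_subset_of_card_le
      · intro x hx
        obtain ⟨a, ha, rfl⟩ := Finset.mem_image.1 hx
        rw [Finset.mem_filter] at ha
        simp [A0, hB a ha.1 ha.2]
      · rw [Finset.card_image_of_injective _ hinj, A0_sum_card.1]
        exact l2.ge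
    have := A0_sum_card.2
    rw [← himg, Finset.sum_image (fun _ _ _ _ h => hinj h)] at this
    exact this
  have sB' : ∑ x ∈ S with y ⬝ᵥ x = 2, L x = 0 := by
    rw [Finset.sum_sub_distrib, Finset.sum_const] at sB
    have : (S.filter (fun x => y ⬝ᵥ x = 2)).card = 9 := l2
    have h9v : ∀ v : V, 9 • v = 0 := by
      intro v
      have := three_smul_zero v
      calc 9 • v = (v + v + v) + (v + v + v) + (v + v + v) := by abel
        _ = 0 := by rw [this]; simp
    rw [this, h9v, zero_sub, neg_eq_zero] at sB
    exact sB
  have hpq0 : L p + L q = 0 := by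
    have h0 : L (∑ x ∈ S, x) = 0 := by rw [hsum, map_zero]
    rw [map_sum, ← Finset.sum_fiberwise_of_maps_to (t := Finset.univ)
      (g := fun x => y ⬝ᵥ x) (by simp), sum_zmod3, sA, sB', hM, Finset.sum_pair hpq] at h0
    simpa using h0
  refine ⟨L, ?_⟩
  apply Finset.eq_of_subset_of_card_le
  · intro x hx
    obtain ⟨a, ha, rfl⟩ := Finset.mem_image.1 hx
    simp only [S0, Finset.mem_filter, Finset.mem_univ, true_and, inS, Bool.or_eq_true]
    have tri : ∀ t : ZMod 3, t = 0 ∨ t = 1 ∨ t = 2 := by decide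
    rcases tri (y ⬝ᵥ a) with h | h | h
    · right
      have haM : a ∈ S.filter (fun x => y ⬝ᵥ x = 0) := Finset.mem_filter.2 ⟨ha, h⟩
      rw [hM] at haM
      have hq' : L q = - L p := by linear_combination hpq0
      rw [hq'] at d0 d1 d2
      simp only [Pi.sub_apply, Pi.neg_apply] at d0 d1 d2
      have z : ∀ t : ZMod 3, -t - t = 0 → t = 0 := by decide
      have z0 := z _ d0
      have z1 := z _ d1
      have z2 := z _ d2
      have z3 : L p 3 ≠ 0 := by
        intro z3
        apply hpq
        apply L.injective
        rw [hq']
        have : L p = 0 := by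
          funext i
          fin_cases i <;> assumption
        rw [this, neg_zero]
      simp only [Finset.mem_insert, Finset.mem_singleton] at haM
      rcases haM with rfl | rfl
      · simp [z0, z1, z2, z3]
      · rw [hq']
        simp [z0, z1, z2, z3]
    · left; left
      exact hL1 a ha h
    · left; right
      have := hB a ha h
      rw [hpq0, zero_sub] at this
      exact this
  · rw [Finset.card_image_of_injective _ L.injective, S0_card, hScard]

end CapProof

/-- Any two maximal caps in `AG(4,3)` with anchor the zero vector (i.e. whose points sum
to zero) are linearly equivalent. -/
theorem maximal_caps_AG43_anchor_zero_linearly_equivalent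
    (S T : Finset (Fin 4 → ZMod 3)) (hS : MaximalCap S) (hT : MaximalCap T)
    (haS : ∑ x ∈ S, x = 0) (haT : ∑ x ∈ T, x = 0) :
    ∃ L : (Fin 4 → ZMod 3) ≃ₗ[ZMod 3] (Fin 4 → ZMod 3),
      S.image (fun x => L x) = T := by
  have key : ∀ S : Finset (Fin 4 → ZMod 3), MaximalCap S → 20 ≤ S.card := by
    intro S hS
    have := hS.2 _ CapProof.S0_cap
    rwa [CapProof.S0_card] at this
  obtain ⟨L, hL⟩ := CapProof.classify S hS.1 (key S hS) haS
  obtain ⟨M, hM⟩ := CapProof.classify T hT.1 (key T hT) haT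
  refine ⟨L.trans M.symm, ?_⟩
  have h1 : S.image (fun x => (L.trans M.symm) x) =
      (S.image (fun x => L x)).image (fun x => M.symm x) := by
    rw [Finset.image_image]
    rfl
  rw [h1, hL, ← hM, Finset.image_image]
  have h2 : ((fun x => M.symm x) ∘ fun x => M x) = id := by
    funext x
    simp
  rw [h2, Finset.image_id]
end

section
/- For every maximal cap S in AG(4,3) with anchor the zero vector, the number of linear automorphisms T of (Fin 4 → ZMod 3) with T(S) = S (as a set) is exactly 2880. -/
namespace CapAux

open Finset

/-- Number of points of `S` on the hyperplane `u · x = c`. -/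
def N {n : ℕ} (S : Finset (Fin n → ZMod 3)) (u : Fin n → ZMod 3) (c : ZMod 3) : ℕ :=
  (S.filter (fun x => u ⬝ᵥ x = c)).card

lemma card_perp {n : ℕ} (w : Fin n → ZMod 3) (hw : w ≠ 0) :
    3 * ((univ : Finset (Fin n → ZMod 3)).filter (fun u => u ⬝ᵥ w = 0)).card = 3 ^ n := by
  obtain ⟨i, hi⟩ := Function.ne_iff.1 hw
  have hi' : w i ≠ 0 := hi
  set t : Fin n → ZMod 3 := Pi.single i (w i)⁻¹ with ht
  have htw : t ⬝ᵥ w = 1 := by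
    rw [ht, single_dotProduct]
    exact inv_mul_cancel₀ hi'
  have key : ∀ c : ZMod 3, ((univ : Finset (Fin n → ZMod 3)).filter (fun u => u ⬝ᵥ w = c)).card =
      ((univ : Finset (Fin n → ZMod 3)).filter (fun u => u ⬝ᵥ w = 0)).card := by
    intro c
    refine Finset.card_bij' (fun u _ => u - c • t) (fun u _ => u + c • t) ?_ ?_ ?_ ?_
    · intro u hu
      simp only [mem_filter, mem_univ, true_and] at hu ⊢
      rw [sub_dotProduct, smul_dotProduct, htw, hu]; simp
    · intro u hu
      simp only [mem_filter, mem_univ, true_and] at hu ⊢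
      rw [add_dotProduct, smul_dotProduct, htw, hu]; simp
    · intro u _; simp
    · intro u _; simp
  have h := Finset.card_eq_sum_card_fiberwise (s := (univ : Finset (Fin n → ZMod 3)))
    (t := (univ : Finset (ZMod 3))) (f := fun u => u ⬝ᵥ w) (fun _ _ => by simp)
  rw [Finset.sum_congr rfl (fun c _ => key c)] at h
  simp [ZMod.card] at h
  omega

/-- indicator of a perpendicular pair -/
def ind {n : ℕ} (u w : Fin n → ZMod 3) : ℤ := if u ⬝ᵥ w = 0 then 1 else 0

lemma sum_ind {n : ℕ} (w : Fin n → ZMod 3) :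
    3 * ∑ u, ind u w = 3 ^ n * (1 + 2 * (if w = 0 then 1 else 0)) := by
  unfold ind
  rw [Finset.sum_boole]
  by_cases hw : w = 0
  · subst hw; simp; ring
  · have := card_perp w hw
    simp only [hw, if_false]
    have h : (3 : ℤ) * ((univ : Finset (Fin n → ZMod 3)).filter (fun u => u ⬝ᵥ w = 0)).card = 3 ^ n := by
      exact_mod_cast this
    simpa using h

lemma sum_fib {n : ℕ} (S : Finset (Fin n → ZMod 3)) (u : Fin n → ZMod 3) (F : ZMod 3 → ℤ) :
    ∑ x ∈ S, F (u ⬝ᵥ x) = N S u 0 * F 0 + N S u 1 * F 1 + N S u 2 * F 2 := by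
  rw [← Finset.sum_fiberwise S (fun x => u ⬝ᵥ x)]
  have : ∀ c, ∑ x ∈ S with u ⬝ᵥ x = c, F (u ⬝ᵥ x) = N S u c * F c := by
    intro c
    rw [Finset.sum_congr rfl (g := fun _ => F c)]
    · simp [N]
    · intro x hx; rw [(mem_filter.1 hx).2]
  rw [Finset.sum_congr rfl (fun c _ => this c)]
  exact Fin.sum_univ_three (fun c : ZMod 3 => (N S u c : ℤ) * F c)

lemma N_sum {n : ℕ} (S : Finset (Fin n → ZMod 3)) (u : Fin n → ZMod 3) :
    N S u 0 + N S u 1 + N S u 2 = S.card := by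
  have := sum_fib S u (fun _ => 1)
  simp at this
  exact_mod_cast this.symm

lemma ind_one {n : ℕ} (S : Finset (Fin n → ZMod 3)) (u : Fin n → ZMod 3) :
    ∑ x ∈ S, ind u x = N S u 0 := by
  have := sum_fib S u (fun c => if c = 0 then 1 else 0)
  unfold ind
  rw [this]
  simp [show (2 : ZMod 3) ≠ 0 by decide]

lemma ind_sub {n : ℕ} (S : Finset (Fin n → ZMod 3)) (u : Fin n → ZMod 3) :
    ∑ x ∈ S, ∑ y ∈ S, ind u (x - y) = (N S u 0 : ℤ) ^ 2 + (N S u 1 : ℤ) ^ 2 + (N S u 2 : ℤ) ^ 2 := by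
  unfold ind
  simp only [dotProduct_sub]
  rw [sum_fib S u (fun a => ∑ y ∈ S, if a - u ⬝ᵥ y = 0 then 1 else 0)]
  simp only [sum_fib S u (fun b => if (0 : ZMod 3) - b = 0 then 1 else 0),
    sum_fib S u (fun b => if (1 : ZMod 3) - b = 0 then 1 else 0),
    sum_fib S u (fun b => if (2 : ZMod 3) - b = 0 then 1 else 0)]
  have e : ∀ a b : ZMod 3, (if a - b = 0 then (1 : ℤ) else 0) = if a = b then 1 else 0 := by decide
  simp only [e]
  simp [show (2 : ZMod 3) ≠ 0 by decide, show (0 : ZMod 3) ≠ 2 by decide,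
    show (2 : ZMod 3) ≠ 1 by decide, show (1 : ZMod 3) ≠ 2 by decide]
  ring

lemma ind_add {n : ℕ} (S : Finset (Fin n → ZMod 3)) (u : Fin n → ZMod 3) :
    ∑ x ∈ S, ∑ y ∈ S, ind u (x + y) = (N S u 0 : ℤ) ^ 2 + 2 * (N S u 1 : ℤ) * (N S u 2 : ℤ) := by
  unfold ind
  simp only [dotProduct_add]
  rw [sum_fib S u (fun a => ∑ y ∈ S, if a + u ⬝ᵥ y = 0 then 1 else 0)]
  simp only [sum_fib S u (fun b => if (0 : ZMod 3) + b = 0 then 1 else 0),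
    sum_fib S u (fun b => if (1 : ZMod 3) + b = 0 then 1 else 0),
    sum_fib S u (fun b => if (2 : ZMod 3) + b = 0 then 1 else 0)]
  have e : ∀ a b : ZMod 3, (if a + b = 0 then (1 : ℤ) else 0) = if a = -b then 1 else 0 := by decide
  simp only [e, show -(0 : ZMod 3) = 0 by decide, show -(1 : ZMod 3) = 2 by decide,
    show -(2 : ZMod 3) = 1 by decide]
  simp [show (2 : ZMod 3) ≠ 0 by decide, show (0 : ZMod 3) ≠ 2 by decide,
    show (2 : ZMod 3) ≠ 1 by decide, show (1 : ZMod 3) ≠ 2 by decide]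
  ring

lemma ind_add3 {n : ℕ} (S : Finset (Fin n → ZMod 3)) (u : Fin n → ZMod 3) :
    ∑ x ∈ S, ∑ y ∈ S, ∑ z ∈ S, ind u (x + y + z) =
      (N S u 0 : ℤ) ^ 3 + (N S u 1 : ℤ) ^ 3 + (N S u 2 : ℤ) ^ 3
        + 6 * (N S u 0 : ℤ) * (N S u 1 : ℤ) * (N S u 2 : ℤ) := by
  unfold ind
  simp only [dotProduct_add]
  have e : ∀ a b : ZMod 3, (if a + b = 0 then (1 : ℤ) else 0) = if a = -b then 1 else 0 := by decide
  have h1 : ∀ a : ZMod 3, ∑ z ∈ S, (if a + u ⬝ᵥ z = 0 then (1 : ℤ) else 0) = N S u (-a) := by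
    intro a
    rw [sum_fib S u (fun b => if a + b = 0 then 1 else 0)]
    simp only [e]
    rcases (by decide : ∀ a : ZMod 3, a = 0 ∨ a = 1 ∨ a = 2) a with rfl | rfl | rfl <;>
      simp only [show -(0 : ZMod 3) = 0 by decide, show -(1 : ZMod 3) = 2 by decide,
        show -(2 : ZMod 3) = 1 by decide] <;>
      simp [show (2 : ZMod 3) ≠ 0 by decide, show (0 : ZMod 3) ≠ 2 by decide,
        show (2 : ZMod 3) ≠ 1 by decide, show (1 : ZMod 3) ≠ 2 by decide]
  simp only [h1]
  rw [sum_fib S u (fun a => ∑ y ∈ S, (N S u (-(a + u ⬝ᵥ y)) : ℤ))]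
  simp only [sum_fib S u (fun b => (N S u (-((0 : ZMod 3) + b)) : ℤ)),
    sum_fib S u (fun b => (N S u (-((1 : ZMod 3) + b)) : ℤ)),
    sum_fib S u (fun b => (N S u (-((2 : ZMod 3) + b)) : ℤ))]
  simp only [show -((0 : ZMod 3) + 0) = 0 by decide, show -((0 : ZMod 3) + 1) = 2 by decide,
    show -((0 : ZMod 3) + 2) = 1 by decide, show -((1 : ZMod 3) + 0) = 2 by decide,
    show -((1 : ZMod 3) + 1) = 1 by decide, show -((1 : ZMod 3) + 2) = 0 by decide,
    show -((2 : ZMod 3) + 0) = 1 by decide, show -((2 : ZMod 3) + 1) = 0 by decide,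
    show -((2 : ZMod 3) + 2) = 2 by decide]
  ring

/-- moment identities -/
lemma moment1 {n : ℕ} (S : Finset (Fin n → ZMod 3)) :
    3 * ∑ u, (N S u 0 : ℤ) = 3 ^ n * (S.card + 2 * (if (0 : Fin n → ZMod 3) ∈ S then 1 else 0)) := by
  simp only [← ind_one]
  rw [Finset.sum_comm, Finset.mul_sum]
  simp only [sum_ind]
  rw [← Finset.mul_sum, Finset.sum_add_distrib, ← Finset.mul_sum]
  simp

lemma moment_sub {n : ℕ} (S : Finset (Fin n → ZMod 3)) :
    3 * ∑ u, ((N S u 0 : ℤ) ^ 2 + (N S u 1 : ℤ) ^ 2 + (N S u 2 : ℤ) ^ 2)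
      = 3 ^ n * ((S.card : ℤ) ^ 2 + 2 * S.card) := by
  simp only [← ind_sub]
  rw [Finset.sum_comm, Finset.mul_sum]
  have : ∀ x ∈ S, 3 * ∑ u, ∑ y ∈ S, ind u (x - y) = 3 ^ n * ((S.card : ℤ) + 2) := by
    intro x hx
    rw [Finset.sum_comm, Finset.mul_sum]
    simp only [sum_ind]
    rw [← Finset.mul_sum, Finset.sum_add_distrib, ← Finset.mul_sum]
    simp [sub_eq_zero, hx]
  rw [Finset.sum_congr rfl this]
  simp; ring

lemma moment_add {n : ℕ} (S : Finset (Fin n → ZMod 3)) :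
    3 * ∑ u, ((N S u 0 : ℤ) ^ 2 + 2 * (N S u 1 : ℤ) * (N S u 2 : ℤ))
      = 3 ^ n * ((S.card : ℤ) ^ 2 + 2 * (S.filter (fun x => -x ∈ S)).card) := by
  simp only [← ind_add]
  rw [Finset.sum_comm, Finset.mul_sum]
  have : ∀ x ∈ S, 3 * ∑ u, ∑ y ∈ S, ind u (x + y) =
      3 ^ n * ((S.card : ℤ) + 2 * (if -x ∈ S then 1 else 0)) := by
    intro x hx
    rw [Finset.sum_comm, Finset.mul_sum]
    simp only [sum_ind]
    rw [← Finset.mul_sum, Finset.sum_add_distrib, ← Finset.mul_sum]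
    simp [add_eq_zero_iff_neg_eq]
  rw [Finset.sum_congr rfl this, ← Finset.mul_sum, Finset.sum_add_distrib, ← Finset.mul_sum]
  simp; ring

lemma cap_third {n : ℕ} {S : Finset (Fin n → ZMod 3)} (hS : IsCap S) {x y z : Fin n → ZMod 3}
    (hx : x ∈ S) (hy : y ∈ S) (hz : z ∈ S) : x + y + z = 0 ↔ (y = x ∧ z = x) := by
  have h3 : ∀ v : Fin n → ZMod 3, v + v + v = 0 := by
    intro v; funext i
    exact (by decide : ∀ a : ZMod 3, a + a + a = 0) (v i)
  constructor
  · intro h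
    by_cases hxy : x = y
    · subst hxy
      refine ⟨rfl, ?_⟩
      exact add_left_cancel (h.trans (h3 x).symm)
    by_cases hxz : x = z
    · subst hxz
      refine ⟨?_, rfl⟩
      have := h.trans (h3 x).symm
      exact add_left_cancel (add_right_cancel this)
    by_cases hyz : y = z
    · subst hyz
      exact absurd (add_right_cancel (add_right_cancel (h.trans (h3 y).symm))) hxy
    · exact absurd h (hS x hx y hy z hz hxy hxz hyz)
  · rintro ⟨rfl, rfl⟩; exact h3 _

lemma moment_add3 {n : ℕ} {S : Finset (Fin n → ZMod 3)} (hS : IsCap S) :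
    3 * ∑ u, ((N S u 0 : ℤ) ^ 3 + (N S u 1 : ℤ) ^ 3 + (N S u 2 : ℤ) ^ 3
        + 6 * (N S u 0 : ℤ) * (N S u 1 : ℤ) * (N S u 2 : ℤ))
      = 3 ^ n * ((S.card : ℤ) ^ 3 + 2 * S.card) := by
  simp only [← ind_add3]
  rw [Finset.sum_comm, Finset.mul_sum]
  have h2 : ∀ x ∈ S, ∀ y ∈ S, 3 * ∑ u, ∑ z ∈ S, ind u (x + y + z) =
      3 ^ n * ((S.card : ℤ) + 2 * (if y = x then 1 else 0)) := by
    intro x hx y hy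
    rw [Finset.sum_comm, Finset.mul_sum]
    simp only [sum_ind]
    rw [← Finset.mul_sum, Finset.sum_add_distrib, ← Finset.mul_sum]
    have : ∀ z ∈ S, (if x + y + z = 0 then (1 : ℤ) else 0) = if z = x then (if y = x then 1 else 0) else 0 := by
      intro z hz
      rw [← ite_and]
      exact if_congr ((cap_third hS hx hy hz).trans and_comm) rfl rfl
    rw [Finset.sum_congr rfl this]
    simp [hx]
  have : ∀ x ∈ S, 3 * ∑ u, ∑ y ∈ S, ∑ z ∈ S, ind u (x + y + z) =
      3 ^ n * ((S.card : ℤ) ^ 2 + 2) := by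
    intro x hx
    rw [Finset.sum_comm, Finset.mul_sum, Finset.sum_congr rfl (h2 x hx), ← Finset.mul_sum,
      Finset.sum_add_distrib, ← Finset.mul_sum]
    simp [hx]; ring
  rw [Finset.sum_congr rfl this]
  simp; ring

lemma N_zero {n : ℕ} (S : Finset (Fin n → ZMod 3)) (c : ZMod 3) :
    N S 0 c = if c = 0 then S.card else 0 := by
  unfold N
  by_cases h : c = 0
  · simp [h]
  · simp [h, Ne.symm h]

lemma cap_mono {n : ℕ} {S D : Finset (Fin n → ZMod 3)} (hS : IsCap S) (h : D ⊆ S) : IsCap D :=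
  fun x hx y hy z hz => hS x (h hx) y (h hy) z (h hz)

/-- A hyperplane section of a cap projects to a cap one dimension lower. -/
lemma section_cap {n : ℕ} {S : Finset (Fin (n + 1) → ZMod 3)} (hS : IsCap S)
    {u : Fin (n + 1) → ZMod 3} {i : Fin (n + 1)} (hu : u i ≠ 0) (c : ZMod 3) :
    IsCap ((S.filter (fun x => u ⬝ᵥ x = c)).image (fun x => fun j => x (i.succAbove j))) ∧
    Set.InjOn (fun (x : Fin (n + 1) → ZMod 3) => fun j => x (i.succAbove j))
      (S.filter (fun x => u ⬝ᵥ x = c) : Finset _) := by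
  have key : ∀ s : Fin (n + 1) → ZMod 3, u ⬝ᵥ s = 0 → (∀ j, s (i.succAbove j) = 0) → s = 0 := by
    intro s h1 h2
    rw [dotProduct, Fin.sum_univ_succAbove _ i] at h1
    simp only [h2, mul_zero, Finset.sum_const_zero, add_zero] at h1
    funext k
    rcases Fin.eq_self_or_eq_succAbove i k with rfl | ⟨j, rfl⟩
    · exact (mul_eq_zero.1 h1).resolve_left hu
    · exact h2 j
  constructor
  · intro x hx y hy z hz hxy hxz hyz h
    simp only [mem_image, mem_filter] at hx hy hz
    obtain ⟨x, ⟨hx, hx'⟩, rfl⟩ := hx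
    obtain ⟨y, ⟨hy, hy'⟩, rfl⟩ := hy
    obtain ⟨z, ⟨hz, hz'⟩, rfl⟩ := hz
    refine hS x hx y hy z hz (fun e => hxy (by rw [e])) (fun e => hxz (by rw [e]))
      (fun e => hyz (by rw [e])) (key _ ?_ ?_)
    · rw [dotProduct_add, dotProduct_add, hx', hy', hz']
      exact (by decide : ∀ a : ZMod 3, a + a + a = 0) c
    · intro j; exact congrFun h j
  · intro x hx y hy h
    have hx' := (mem_filter.1 (mem_coe.1 hx)).2
    have hy' := (mem_filter.1 (mem_coe.1 hy)).2
    refine sub_eq_zero.1 (key _ ?_ ?_)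
    · rw [dotProduct_sub, hx', hy', sub_self]
    · intro j; exact sub_eq_zero.2 (congrFun h j)

lemma N_le {n m : ℕ} (hm : ∀ D : Finset (Fin n → ZMod 3), IsCap D → D.card ≤ m)
    {S : Finset (Fin (n + 1) → ZMod 3)} (hS : IsCap S)
    {u : Fin (n + 1) → ZMod 3} (hu : u ≠ 0) (c : ZMod 3) : N S u c ≤ m := by
  obtain ⟨i, hi⟩ := Function.ne_iff.1 hu
  obtain ⟨h1, h2⟩ := section_cap hS (i := i) hi c
  have := hm _ h1
  rwa [Finset.card_image_of_injOn h2] at this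

lemma cap1 (D : Finset (Fin 1 → ZMod 3)) (hD : IsCap D) : D.card ≤ 2 := by
  by_contra h
  obtain ⟨E, hE, hE3⟩ := Finset.exists_subset_card_eq (show 3 ≤ D.card by omega)
  have : E = univ := by
    rw [← Finset.card_eq_iff_eq_univ, hE3]; simp [ZMod.card]
  have hc := cap_mono hD hE
  subst this
  exact hc 0 (by simp) 1 (by simp) 2 (by simp) (by decide) (by decide) (by decide) (by decide)

lemma cap2 (D : Finset (Fin 2 → ZMod 3)) (hD : IsCap D) : D.card ≤ 4 := by
  by_contra h
  obtain ⟨E, hE, hE3⟩ := Finset.exists_subset_card_eq (show 5 ≤ D.card by omega)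
  have hc := cap_mono hD hE
  have hm := moment_sub E
  rw [hE3, ← Finset.add_sum_erase _ _ (mem_univ (0 : Fin 2 → ZMod 3))] at hm
  have hb : ∀ u ∈ univ.erase (0 : Fin 2 → ZMod 3),
      ((N E u 0 : ℤ) ^ 2 + (N E u 1 : ℤ) ^ 2 + (N E u 2 : ℤ) ^ 2) ≤ 9 := by
    intro u hu
    have hu' := Finset.ne_of_mem_erase hu
    have h0 := N_le cap1 hc hu' 0
    have h1 := N_le cap1 hc hu' 1
    have h2 := N_le cap1 hc hu' 2
    have hs := N_sum E u
    rw [hE3] at hs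
    generalize N E u 0 = a at *
    generalize N E u 1 = b at *
    generalize N E u 2 = c at *
    interval_cases a <;> interval_cases b <;> first | omega | (interval_cases c <;> omega)
  have := Finset.sum_le_sum hb
  rw [Finset.sum_const, Finset.card_erase_of_mem (mem_univ _)] at this
  simp [N_zero, hE3, ZMod.card, show (2 : ZMod 3) ≠ 0 by decide] at hm this
  linarith

lemma cap3 (D : Finset (Fin 3 → ZMod 3)) (hD : IsCap D) : D.card ≤ 9 := by
  by_contra h
  obtain ⟨E, hE, hE3⟩ := Finset.exists_subset_card_eq (show 10 ≤ D.card by omega)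
  have hc := cap_mono hD hE
  have hm := moment_sub E
  rw [hE3, ← Finset.add_sum_erase _ _ (mem_univ (0 : Fin 3 → ZMod 3))] at hm
  have hb : ∀ u ∈ univ.erase (0 : Fin 3 → ZMod 3),
      ((N E u 0 : ℤ) ^ 2 + (N E u 1 : ℤ) ^ 2 + (N E u 2 : ℤ) ^ 2) ≤ 36 := by
    intro u hu
    have hu' := Finset.ne_of_mem_erase hu
    have h0 := N_le cap2 hc hu' 0
    have h1 := N_le cap2 hc hu' 1
    have h2 := N_le cap2 hc hu' 2
    have hs := N_sum E u
    rw [hE3] at hs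
    generalize N E u 0 = a at *
    generalize N E u 1 = b at *
    generalize N E u 2 = c at *
    have : c = 10 - a - b := by omega
    subst this
    interval_cases a <;> interval_cases b <;> omega
  have := Finset.sum_le_sum hb
  rw [Finset.sum_const, Finset.card_erase_of_mem (mem_univ _)] at this
  simp [N_zero, hE3, ZMod.card, show (2 : ZMod 3) ≠ 0 by decide] at hm this
  linarith

lemma N_mod {n : ℕ} (S : Finset (Fin n → ZMod 3)) (u : Fin n → ZMod 3) :
    u ⬝ᵥ (∑ x ∈ S, x) = (N S u 1 : ZMod 3) + 2 * (N S u 2 : ZMod 3) := by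
  rw [dotProduct_sum, ← Finset.sum_fiberwise S (fun x => u ⬝ᵥ x)]
  have : ∀ c, ∑ x ∈ S with u ⬝ᵥ x = c, (u ⬝ᵥ x) = N S u c * c := by
    intro c
    rw [Finset.sum_congr rfl (g := fun _ => c)]
    · simp [N]
    · intro x hx; rw [(mem_filter.1 hx).2]
  rw [Finset.sum_congr rfl (fun c _ => this c)]
  refine (Fin.sum_univ_three (fun c : ZMod 3 => (N S u c : ZMod 3) * c)).trans ?_
  change (N S u 0 : ZMod 3) * 0 + (N S u 1 : ZMod 3) * 1 + (N S u 2 : ZMod 3) * 2 = _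
  ring

/-- A 9-cap in `AG(3,3)` has vector sum zero. -/
lemma cap9_sum (E : Finset (Fin 3 → ZMod 3)) (hc : IsCap E) (hE : E.card = 9) :
    ∑ x ∈ E, x = 0 := by
  have hm := moment_sub E
  have hm3 := moment_add3 hc
  rw [hE, ← Finset.add_sum_erase _ _ (mem_univ (0 : Fin 3 → ZMod 3))] at hm hm3
  set f : (Fin 3 → ZMod 3) → ℤ := fun u =>
    ((N E u 0 : ℤ) ^ 3 + (N E u 1 : ℤ) ^ 3 + (N E u 2 : ℤ) ^ 3
        + 6 * (N E u 0 : ℤ) * (N E u 1 : ℤ) * (N E u 2 : ℤ))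
    + 3 * ((N E u 0 : ℤ) ^ 2 + (N E u 1 : ℤ) ^ 2 + (N E u 2 : ℤ) ^ 2) - 324 with hf
  have hb : ∀ u ∈ univ.erase (0 : Fin 3 → ZMod 3), 0 ≤ f u ∧
      (f u = 0 → (N E u 1 : ZMod 3) + 2 * (N E u 2 : ZMod 3) = 0) := by
    intro u hu
    have hu' := Finset.ne_of_mem_erase hu
    have h0 := N_le cap2 hc hu' 0
    have h1 := N_le cap2 hc hu' 1
    have h2 := N_le cap2 hc hu' 2
    have hs := N_sum E u
    rw [hE] at hs
    simp only [hf]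
    generalize N E u 0 = a at *
    generalize N E u 1 = b at *
    generalize N E u 2 = c at *
    have : c = 9 - a - b := by omega
    subst this
    interval_cases a <;> interval_cases b <;> first | omega | (norm_num; try decide)
  have hsum : ∑ u ∈ univ.erase (0 : Fin 3 → ZMod 3), f u = 0 := by
    simp only [hf]
    rw [Finset.sum_sub_distrib, Finset.sum_add_distrib, ← Finset.mul_sum, Finset.sum_const,
      Finset.card_erase_of_mem (mem_univ _)]
    simp [N_zero, hE, ZMod.card, show (2 : ZMod 3) ≠ 0 by decide] at hm hm3 ⊢
    linarith
  have hz := (Finset.sum_eq_zero_iff_of_nonneg (fun u hu => (hb u hu).1)).1 hsum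
  have hall : ∀ u : Fin 3 → ZMod 3, u ⬝ᵥ (∑ x ∈ E, x) = 0 := by
    intro u
    by_cases hu : u = 0
    · simp [hu]
    · have hu' : u ∈ univ.erase (0 : Fin 3 → ZMod 3) := by simp [hu]
      rw [N_mod]
      exact (hb u hu').2 (hz u hu')
  exact dotProduct_eq_zero _ (fun u => by rw [dotProduct_comm]; exact hall u)

/-- The vector sum of nine cap points on a hyperplane vanishes. -/
lemma slice9_sum {S : Finset (Fin 4 → ZMod 3)} (hS : IsCap S) {u : Fin 4 → ZMod 3} (hu : u ≠ 0)
    (c : ZMod 3) (h9 : N S u c = 9) : ∑ x ∈ S with u ⬝ᵥ x = c, x = 0 := by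
  obtain ⟨i, hi⟩ := Function.ne_iff.1 hu
  have hi' : u i ≠ 0 := hi
  obtain ⟨h1, h2⟩ := section_cap hS (i := i) hi' c
  have hz := cap9_sum _ h1 (by rw [Finset.card_image_of_injOn h2]; exact h9)
  rw [Finset.sum_image h2] at hz
  set s := ∑ x ∈ S with u ⬝ᵥ x = c, x with hs
  have hs2 : ∀ j, s (i.succAbove j) = 0 := by
    intro j
    have := congrFun hz j
    rw [Finset.sum_apply] at this
    rw [hs, Finset.sum_apply]
    exact this
  have hs1 : u ⬝ᵥ s = 0 := by
    rw [hs, dotProduct_sum, Finset.sum_congr rfl (g := fun _ => c)]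
    · have h9' : (S.filter (fun x => u ⬝ᵥ x = c)).card = 9 := h9
      rw [Finset.sum_const, h9']
      exact (by decide : ∀ c : ZMod 3, 9 • c = 0) c
    · intro x hx; exact (mem_filter.1 hx).2
  rw [dotProduct, Fin.sum_univ_succAbove _ i] at hs1
  simp only [hs2, mul_zero, Finset.sum_const_zero, add_zero] at hs1
  funext k
  rcases Fin.eq_self_or_eq_succAbove i k with rfl | ⟨j, rfl⟩
  · exact (mul_eq_zero.1 hs1).resolve_left hi'
  · exact hs2 j

/-- Codimension two sections of a cap in `AG(4,3)` have at most four points. -/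
lemma plane_le {S : Finset (Fin 4 → ZMod 3)} (hS : IsCap S) {u v : Fin 4 → ZMod 3} (hu : u ≠ 0)
    (h : ∀ k : ZMod 3, v ≠ k • u) (c d : ZMod 3) :
    (S.filter (fun x => u ⬝ᵥ x = c ∧ v ⬝ᵥ x = d)).card ≤ 4 := by
  obtain ⟨i, hi⟩ := Function.ne_iff.1 hu
  have hi' : u i ≠ 0 := hi
  obtain ⟨h1, h2⟩ := section_cap hS (i := i) hi' c
  set k : ZMod 3 := v i * (u i)⁻¹ with hk
  set w : Fin 3 → ZMod 3 := fun j => (v - k • u) (i.succAbove j) with hw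
  have hvi : (v - k • u) i = 0 := by
    simp [hk, mul_assoc, inv_mul_cancel₀ hi']
  have hw0 : w ≠ 0 := by
    intro h0
    apply h k
    rw [← sub_eq_zero]
    funext l
    rcases Fin.eq_self_or_eq_succAbove i l with rfl | ⟨j, rfl⟩
    · exact hvi
    · exact congrFun h0 j
  have hdot : ∀ x : Fin 4 → ZMod 3, w ⬝ᵥ (fun j => x (i.succAbove j)) = v ⬝ᵥ x - k * (u ⬝ᵥ x) := by
    intro x
    have : (v - k • u) ⬝ᵥ x = v ⬝ᵥ x - k * (u ⬝ᵥ x) := by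
      rw [sub_dotProduct, smul_dotProduct, smul_eq_mul]
    rw [← this, dotProduct, dotProduct, Fin.sum_univ_succAbove _ i, hvi]
    simp [hw]
  have hN := N_le cap2 h1 hw0 (d - k * c)
  refine le_trans ?_ hN
  unfold N
  have hsub : ((S.filter (fun x => u ⬝ᵥ x = c ∧ v ⬝ᵥ x = d)).image
      (fun x => fun j => x (i.succAbove j))) ⊆
      (((S.filter (fun x => u ⬝ᵥ x = c)).image (fun x => fun j => x (i.succAbove j))).filter
        (fun x => w ⬝ᵥ x = d - k * c)) := by
    intro y hy
    obtain ⟨x, hx, rfl⟩ := mem_image.1 hy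
    obtain ⟨hxS, hxu, hxv⟩ := mem_filter.1 hx
    refine mem_filter.2 ⟨mem_image.2 ⟨x, mem_filter.2 ⟨hxS, hxu⟩, rfl⟩, ?_⟩
    rw [hdot, hxu, hxv]
  have hinj : Set.InjOn (fun (x : Fin 4 → ZMod 3) => fun j => x (i.succAbove j))
      (S.filter (fun x => u ⬝ᵥ x = c ∧ v ⬝ᵥ x = d) : Finset _) := by
    refine h2.mono ?_
    intro x hx
    have hx' := mem_filter.1 (mem_coe.1 hx)
    exact mem_coe.2 (mem_filter.2 ⟨hx'.1, hx'.2.1⟩)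
  rw [← Finset.card_image_of_injOn hinj]
  exact Finset.card_le_card hsub

lemma lp_bound : ∀ a : ℕ, a < 10 → ∀ b : ℕ, b < 10 → ∀ c : ℕ, c < 10 → a + b + c = 20 → (b + 2 * c) % 3 = 0 →
    (6064 + 12 * (a : ℤ) - 9 * ((a : ℤ) ^ 2 + (b : ℤ) ^ 2 + (c : ℤ) ^ 2)
      + 3 * ((a : ℤ) ^ 2 + 2 * (b : ℤ) * (c : ℤ))
      - 2 * ((a : ℤ) ^ 3 + (b : ℤ) ^ 3 + (c : ℤ) ^ 3 + 6 * (a : ℤ) * (b : ℤ) * (c : ℤ)))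
      ≤ if a = 2 then 216 else 0 := by
  decide +kernel

/-- The key structural fact: a 20-cap with sum zero is centrally symmetric. -/
lemma symm_of_card20 {S : Finset (Fin 4 → ZMod 3)} (hS : IsCap S) (h20 : S.card = 20)
    (h0 : ∑ x ∈ S, x = 0) : ∀ x ∈ S, -x ∈ S := by
  classical
  set A : Finset (Fin 4 → ZMod 3) := (univ.erase 0).filter (fun u => N S u 0 = 2) with hA
  set T : Finset (Fin 4 → ZMod 3) := S.filter (fun x => -x ∈ S) with hT
  have hm1 := moment1 S
  have hm2 := moment_sub S
  have hm2' := moment_add S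
  have hm3 := moment_add3 hS
  rw [← hT] at hm2'
  rw [h20, ← Finset.add_sum_erase _ _ (mem_univ (0 : Fin 4 → ZMod 3))] at hm1 hm2 hm2' hm3
  have hb : ∀ u ∈ univ.erase (0 : Fin 4 → ZMod 3),
    (6064 + 12 * (N S u 0 : ℤ) - 9 * ((N S u 0 : ℤ) ^ 2 + (N S u 1 : ℤ) ^ 2 + (N S u 2 : ℤ) ^ 2)
      + 3 * ((N S u 0 : ℤ) ^ 2 + 2 * (N S u 1 : ℤ) * (N S u 2 : ℤ))
      - 2 * ((N S u 0 : ℤ) ^ 3 + (N S u 1 : ℤ) ^ 3 + (N S u 2 : ℤ) ^ 3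
        + 6 * (N S u 0 : ℤ) * (N S u 1 : ℤ) * (N S u 2 : ℤ)))
      ≤ if N S u 0 = 2 then 216 else 0 := by
    intro u hu
    have hu' := Finset.ne_of_mem_erase hu
    refine lp_bound _ (Nat.lt_succ_of_le (N_le cap3 hS hu' 0))
      _ (Nat.lt_succ_of_le (N_le cap3 hS hu' 1)) _ (Nat.lt_succ_of_le (N_le cap3 hS hu' 2))
      ((N_sum S u).trans h20) ?_
    have := N_mod S u
    rw [h0, dotProduct_zero] at this
    have h3 : ((N S u 1 + 2 * N S u 2 : ℕ) : ZMod 3) = 0 := by push_cast; exact this.symm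
    exact Nat.mod_eq_zero_of_dvd ((ZMod.natCast_eq_zero_iff _ 3).1 h3)
  have hAT : 60 + 9 * T.card ≤ 12 * A.card := by
    have hs := Finset.sum_le_sum hb
    rw [← Finset.sum_filter, ← hA, Finset.sum_sub_distrib, Finset.sum_add_distrib,
      Finset.sum_sub_distrib, Finset.sum_add_distrib, ← Finset.mul_sum, ← Finset.mul_sum,
      ← Finset.mul_sum, ← Finset.mul_sum, Finset.sum_const, Finset.sum_const,
      Finset.card_erase_of_mem (mem_univ _), Finset.card_univ, Fintype.card_fun, ZMod.card,
      Fintype.card_fin] at hs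
    simp only [N_zero, h20, if_true, show (2 : ZMod 3) ≠ 0 by decide, if_false,
      show (1 : ZMod 3) ≠ 0 by decide] at hm1 hm2 hm2' hm3
    have hf : (0 : ℤ) ≤ if (0 : Fin 4 → ZMod 3) ∈ S then 1 else 0 := by split_ifs <;> norm_num
    generalize (if (0 : Fin 4 → ZMod 3) ∈ S then (1 : ℤ) else 0) = f0 at hm1 hf
    norm_num at hm1 hm2 hm2' hm3 hs
    zify
    linarith
  -- structure of the (2,9,9) directions
  have hA' : ∀ u ∈ A, u ≠ 0 ∧ N S u 0 = 2 ∧ N S u 1 = 9 ∧ N S u 2 = 9 := by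
    intro u hu
    obtain ⟨h1, h2⟩ := mem_filter.1 hu
    have hu' := Finset.ne_of_mem_erase h1
    have a1 := N_le cap3 hS hu' 1
    have a2 := N_le cap3 hS hu' 2
    have a3 := N_sum S u
    exact ⟨hu', h2, by omega, by omega⟩
  have hAsub : ∀ u ∈ A, S.filter (fun x => u ⬝ᵥ x = 0) = T.filter (fun x => u ⬝ᵥ x = 0) := by
    intro u hu
    obtain ⟨hu0, n0, n1, n2⟩ := hA' u hu
    have s1 := slice9_sum hS hu0 1 n1
    have s2 := slice9_sum hS hu0 2 n2
    have hsum := h0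
    rw [← Finset.sum_fiberwise S (fun x => u ⬝ᵥ x)] at hsum
    have hsum' : (∑ x ∈ S with u ⬝ᵥ x = 0, x) + (∑ x ∈ S with u ⬝ᵥ x = 1, x)
        + (∑ x ∈ S with u ⬝ᵥ x = 2, x) = 0 :=
      (Fin.sum_univ_three (fun c : ZMod 3 => ∑ x ∈ S with u ⬝ᵥ x = c, x)).symm.trans hsum
    rw [s1, s2, add_zero, add_zero] at hsum'
    obtain ⟨p, q, hpq, hpq'⟩ := Finset.card_eq_two.1 n0
    rw [hpq', Finset.sum_pair hpq] at hsum'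
    have hp : p ∈ S ∧ u ⬝ᵥ p = 0 := mem_filter.1 (hpq' ▸ Finset.mem_insert_self p {q})
    have hq : q ∈ S ∧ u ⬝ᵥ q = 0 :=
      mem_filter.1 (hpq' ▸ Finset.mem_insert_of_mem (Finset.mem_singleton_self q))
    have e1 : -p = q := neg_eq_of_add_eq_zero_right hsum'
    have e2 : -q = p := by rw [← e1, neg_neg]
    refine Finset.Subset.antisymm ?_ (Finset.filter_subset_filter _ (Finset.filter_subset _ _))
    rw [hpq']
    intro x hx
    rcases Finset.mem_insert.1 hx with rfl | hx
    · exact mem_filter.2 ⟨mem_filter.2 ⟨hp.1, e1 ▸ hq.1⟩, hp.2⟩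
    · rw [Finset.mem_singleton] at hx
      subst hx
      exact mem_filter.2 ⟨mem_filter.2 ⟨hq.1, e2 ▸ hp.1⟩, hq.2⟩
  -- each point of `T` lies on at most two of them
  have hTA : ∀ x ∈ T, (A.filter (fun u => u ⬝ᵥ x = 0)).card ≤ 2 := by
    intro x hx
    by_contra hcon
    have hne : (A.filter (fun u => u ⬝ᵥ x = 0)).Nonempty := Finset.card_pos.1 (by omega)
    obtain ⟨u, hu⟩ := hne
    obtain ⟨huA, hux⟩ := mem_filter.1 hu
    have : ∃ v ∈ A.filter (fun u => u ⬝ᵥ x = 0), v ∉ ({u, -u} : Finset _) := by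
      by_contra hall
      push Not at hall
      exact hcon ((Finset.card_le_card hall).trans Finset.card_le_two)
    obtain ⟨v, hv, hvu⟩ := this
    obtain ⟨hvA, hvx⟩ := mem_filter.1 hv
    obtain ⟨hu0, n0, n1, n2⟩ := hA' u huA
    obtain ⟨hv0, m0, m1, m2⟩ := hA' v hvA
    have hind : ∀ k : ZMod 3, v ≠ k • u := by
      intro k hk
      rcases (by decide : ∀ a : ZMod 3, a = 0 ∨ a = 1 ∨ a = -1) k with rfl | rfl | rfl
      · exact hv0 (by rw [hk, zero_smul])
      · apply hvu; rw [hk, one_smul]; simp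
      · apply hvu; rw [hk, neg_smul, one_smul]; simp
    obtain ⟨hxS, hxS'⟩ := mem_filter.1 hx
    have hx0 : x ≠ -x := by
      intro hxx
      have hx0 : x = 0 := by
        funext i
        exact (by decide : ∀ a : ZMod 3, a = -a → a = 0) (x i) (congrFun hxx i)
      -- then the two points of `u = 0` would be `0` and another self-paired point
      have hc2 : (S.filter (fun y => u ⬝ᵥ y = 0)).card = 2 := n0
      obtain ⟨y, hy, hyx⟩ := Finset.exists_mem_ne (by omega : 1 < (S.filter (fun y => u ⬝ᵥ y = 0)).card) x
      rw [hAsub u huA] at hy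
      have hyT := mem_filter.1 (mem_filter.1 hy).1
      have h3 := (cap_third hS hxS hyT.1 hyT.2).1 (by rw [hx0]; simp)
      exact hyx h3.1
    have hset : ∀ w : Fin 4 → ZMod 3, N S w 0 = 2 → w ⬝ᵥ x = 0 →
        S.filter (fun y => w ⬝ᵥ y = 0) = {x, -x} := by
      intro w hw hwx
      symm
      apply Finset.eq_of_subset_of_card_le
      · intro y hy
        rcases Finset.mem_insert.1 hy with rfl | hy
        · exact mem_filter.2 ⟨hxS, hwx⟩
        · rw [Finset.mem_singleton] at hy
          subst hy
          exact mem_filter.2 ⟨hxS', by rw [dotProduct_neg, hwx, neg_zero]⟩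
      · rw [Finset.card_pair hx0]; exact hw.le
    have e1 := hset u n0 hux
    have e2 := hset v m0 hvx
    -- the nine points with `u = 1` have `v = 1` or `v = 2`
    have hcov : S.filter (fun y => u ⬝ᵥ y = 1) ⊆
        S.filter (fun y => u ⬝ᵥ y = 1 ∧ v ⬝ᵥ y = 1) ∪ S.filter (fun y => u ⬝ᵥ y = 1 ∧ v ⬝ᵥ y = 2) := by
      intro y hy
      obtain ⟨hyS, hyu⟩ := mem_filter.1 hy
      rcases (by decide : ∀ a : ZMod 3, a = 0 ∨ a = 1 ∨ a = 2) (v ⬝ᵥ y) with h | h | h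
      · exfalso
        have : y ∈ S.filter (fun y => v ⬝ᵥ y = 0) := mem_filter.2 ⟨hyS, h⟩
        rw [e2, ← e1] at this
        rw [(mem_filter.1 this).2] at hyu
        exact absurd hyu (by decide)
      · exact Finset.mem_union_left _ (mem_filter.2 ⟨hyS, hyu, h⟩)
      · exact Finset.mem_union_right _ (mem_filter.2 ⟨hyS, hyu, h⟩)
    have c1 := Finset.card_le_card hcov
    have c2 := Finset.card_union_le (S.filter (fun y => u ⬝ᵥ y = 1 ∧ v ⬝ᵥ y = 1))
      (S.filter (fun y => u ⬝ᵥ y = 1 ∧ v ⬝ᵥ y = 2))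
    have c3 := plane_le hS hu0 hind 1 1
    have c4 := plane_le hS hu0 hind 1 2
    have c5 : (S.filter (fun y => u ⬝ᵥ y = 1)).card = 9 := n1
    omega
  have hdc : 2 * A.card ≤ 2 * T.card := by
    have d1 : ∑ u ∈ A, (T.filter (fun x => u ⬝ᵥ x = 0)).card = 2 * A.card := by
      rw [Finset.sum_congr rfl (g := fun _ => 2)]
      · simp [mul_comm]
      · intro u hu
        rw [← hAsub u hu]
        exact (hA' u hu).2.1
    have d2 : ∑ u ∈ A, (T.filter (fun x => u ⬝ᵥ x = 0)).card
        = ∑ x ∈ T, (A.filter (fun u => u ⬝ᵥ x = 0)).card :=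
      Finset.sum_card_bipartiteAbove_eq_sum_card_bipartiteBelow _
    have d3 := Finset.sum_le_sum hTA
    rw [Finset.sum_const, smul_eq_mul] at d3
    omega
  have hTS : T = S := Finset.eq_of_subset_of_card_le (Finset.filter_subset _ _) (by omega)
  intro x hx
  rw [← hTS] at hx
  exact (mem_filter.1 hx).2

/-- Octal encoding of a vector of `F₃⁴`. -/
def enc (x : Fin 4 → ZMod 3) : ℕ :=
  (x 0).val + 8 * (x 1).val + 64 * (x 2).val + 512 * (x 3).val

/-- Decoding. -/
def dec (c : ℕ) : Fin 4 → ZMod 3 :=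
  ![((c &&& 7 : ℕ) : ZMod 3), (((c >>> 3) &&& 7 : ℕ) : ZMod 3),
    (((c >>> 6) &&& 7 : ℕ) : ZMod 3), (((c >>> 9) &&& 7 : ℕ) : ZMod 3)]

/-- Addition of encoded vectors. -/
def addc (x y : ℕ) : ℕ := x + y - 3 * (((x + y + 585) >>> 2) &&& 585)

/-- Negation of encoded vectors. -/
def negc (x : ℕ) : ℕ := addc x x

lemma forallV {P : (Fin 4 → ZMod 3) → Prop} (h : ∀ a b c d : ZMod 3, P ![a, b, c, d]) : ∀ x, P x := by
  intro x
  have : x = ![x 0, x 1, x 2, x 3] := by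
    funext i; fin_cases i <;> rfl
  rw [this]; exact h _ _ _ _

lemma dec_enc : ∀ x, dec (enc x) = x := forallV (by decide +kernel)

lemma enc_inj {x y : Fin 4 → ZMod 3} (h : enc x = enc y) : x = y := by
  rw [← dec_enc x, h, dec_enc]

lemma enc_add_aux : ∀ a b c d a' b' c' d' : ZMod 3,
    enc ![a + a', b + b', c + c', d + d'] = addc (enc ![a, b, c, d]) (enc ![a', b', c', d']) := by
  decide +kernel

lemma enc_add (x y : Fin 4 → ZMod 3) : enc (x + y) = addc (enc x) (enc y) := by
  have : ∀ z : Fin 4 → ZMod 3, z = ![z 0, z 1, z 2, z 3] := by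
    intro z; funext i; fin_cases i <;> rfl
  have h := enc_add_aux (x 0) (x 1) (x 2) (x 3) (y 0) (y 1) (y 2) (y 3)
  rw [← this x, ← this y] at h
  rw [← h, this (x + y)]
  rfl

lemma neg_eq_add (x : Fin 4 → ZMod 3) : -x = x + x := by
  funext i
  exact (by decide : ∀ a : ZMod 3, -a = a + a) (x i)

lemma enc_neg (x : Fin 4 → ZMod 3) : enc (-x) = negc (enc x) := by
  rw [neg_eq_add, enc_add]; rfl

/-- The standard 20-cap, as a list of codes. -/
def L0 : List ℕ := [1, 8, 64, 512, 137, 1033, 577, 584, 657, 1105,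
  2, 16, 128, 1024, 82, 530, 1154, 1168, 1098, 650]

/-- Membership test in the standard cap. -/
def inS0 (c : ℕ) : Bool := Nat.testBit 4009234343881196933635054359975170271462799290048791942655499635789852087818599144116150525247297737112388260526621834006240071836717042496671698768174105526507066777179061643056985564485943616174689458610056993060743996286087412677701912962948684064380519142462171620842009885206125689283224642222486552056889341171182281534624589982530365832116109574 c

/-- The standard 20-cap. -/
def S0 : Finset (Fin 4 → ZMod 3) := univ.filter (fun x => inS0 (enc x) = true)

lemma mem_S0 (x : Fin 4 → ZMod 3) : x ∈ S0 ↔ inS0 (enc x) = true := by simp [S0]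

lemma mem_S0_aux : ∀ x, inS0 (enc x) = true ↔ enc x ∈ L0 := forallV (by decide +kernel)

lemma mem_S0_iff (x : Fin 4 → ZMod 3) : x ∈ S0 ↔ enc x ∈ L0 := (mem_S0 x).trans (mem_S0_aux x)

lemma enc_dec_L0 : ∀ c ∈ L0, enc (dec c) = c := by decide +kernel

lemma L0_nodup : L0.Nodup := by decide +kernel

lemma sum_S0 (f : ℕ → ℕ) : ∑ x ∈ S0, f (enc x) = (L0.map f).sum := by
  have h : S0.image enc = L0.toFinset := by
    ext c
    simp only [mem_image, List.mem_toFinset, mem_S0_iff]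
    constructor
    · rintro ⟨x, hx, rfl⟩; exact hx
    · intro hc; exact ⟨dec c, by rw [enc_dec_L0 c hc]; exact hc, enc_dec_L0 c hc⟩
  rw [← Finset.sum_image (f := f) (g := enc) (fun x _ y _ hxy => enc_inj hxy), h,
    List.sum_toFinset _ L0_nodup]

lemma card_S0 : S0.card = 20 := by
  have := sum_S0 (fun _ => 1)
  simpa [L0] using this

lemma S0_cap_aux : ∀ a ∈ L0, ∀ b ∈ L0, a ≠ b → negc (addc a b) ∉ L0 := by decide +kernel

lemma isCap_S0 : IsCap S0 := by
  intro x hx y hy z hz hxy _ _ h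
  refine S0_cap_aux _ ((mem_S0_iff x).1 hx) _ ((mem_S0_iff y).1 hy) (fun e => hxy (enc_inj e)) ?_
  rw [← enc_add, ← enc_neg, neg_eq_of_add_eq_zero_right h]
  exact (mem_S0_iff z).1 hz

lemma S0_complete_aux : ∀ x, enc x ∈ L0 ∨ ∃ a ∈ L0, ∃ b ∈ L0, a ≠ b ∧ a ≠ enc x ∧ b ≠ enc x ∧
    addc (addc a b) (enc x) = 0 := forallV (by decide +kernel)

lemma S0_complete (x : Fin 4 → ZMod 3) (hx : x ∉ S0) : ¬ IsCap (insert x S0) := by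
  intro h
  rcases S0_complete_aux x with h1 | ⟨a, ha, b, hb, hab, hax, hbx, h0⟩
  · exact hx ((mem_S0_iff x).2 h1)
  · have ea := enc_dec_L0 a ha
    have eb := enc_dec_L0 b hb
    refine h (dec a) ?_ (dec b) ?_ x (Finset.mem_insert_self _ _) ?_ ?_ ?_ ?_
    · exact Finset.mem_insert_of_mem ((mem_S0_iff _).2 (by rw [ea]; exact ha))
    · exact Finset.mem_insert_of_mem ((mem_S0_iff _).2 (by rw [eb]; exact hb))
    · intro e; apply hab; rw [← ea, ← eb, e]
    · intro e; apply hax; rw [← ea, e]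
    · intro e; apply hbx; rw [← eb, e]
    · apply enc_inj
      rw [enc_add, enc_add, ea, eb, h0]; rfl

/-- Scalar multiplication by a digit. -/
def smulc (d v : ℕ) : ℕ := bif Nat.beq d 0 then 0 else bif Nat.beq d 1 then v else addc v v

/-- Encoded linear combination: the image of the vector with code `s` under the linear map sending
the standard basis to the vectors with codes `a b c d`. -/
def comb (s a b c d : ℕ) : ℕ :=
  addc (addc (smulc (s &&& 7) a) (smulc ((s >>> 3) &&& 7) b))
    (addc (smulc ((s >>> 6) &&& 7) c) (smulc ((s >>> 9) &&& 7) d))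

/-- The linear map sending the standard basis to `v`. -/
def lin (v : Fin 4 → Fin 4 → ZMod 3) : (Fin 4 → ZMod 3) →ₗ[ZMod 3] (Fin 4 → ZMod 3) :=
  Fintype.linearCombination (ZMod 3) v

lemma lin_apply (v : Fin 4 → Fin 4 → ZMod 3) (x : Fin 4 → ZMod 3) :
    lin v x = x 0 • v 0 + x 1 • v 1 + (x 2 • v 2 + x 3 • v 3) := by
  rw [lin, Fintype.linearCombination_apply, Fin.sum_univ_four, add_assoc]

lemma digits : ∀ x, (enc x &&& 7 = (x 0).val) ∧ ((enc x >>> 3) &&& 7 = (x 1).val) ∧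
    ((enc x >>> 6) &&& 7 = (x 2).val) ∧ ((enc x >>> 9) &&& 7 = (x 3).val) :=
  forallV (by decide +kernel)

lemma enc_smul (k : ZMod 3) (v : Fin 4 → ZMod 3) : enc (k • v) = smulc k.val (enc v) := by
  rcases (by decide : ∀ a : ZMod 3, a = 0 ∨ a = 1 ∨ a = 2) k with rfl | rfl | rfl
  · rw [zero_smul]; rfl
  · rw [one_smul]; rfl
  · rw [show (2 : ZMod 3) = 1 + 1 by decide, add_smul, one_smul, enc_add]; rfl

lemma enc_lin (v : Fin 4 → Fin 4 → ZMod 3) (x : Fin 4 → ZMod 3) :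
    enc (lin v x) = comb (enc x) (enc (v 0)) (enc (v 1)) (enc (v 2)) (enc (v 3)) := by
  obtain ⟨h0, h1, h2, h3⟩ := digits x
  rw [lin_apply, comb, h0, h1, h2, h3]
  simp only [enc_add, enc_smul]

/-- Columns of linear maps carrying the standard cap to the 24 caps met in the search. -/
def table : List (ℕ × ℕ × ℕ × ℕ) := [
  (657, 1105, 1154, 8), (657, 81, 1161, 521), (145, 593, 1106, 530),
  (1105, 529, 1161, 73), (593, 1041, 82, 658), (81, 529, 578, 584),
  (145, 1105, 594, 1042), (1169, 81, 649, 1033), (1169, 593, 642, 8),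
  (81, 1041, 1090, 1096), (593, 1041, 649, 73), (1105, 529, 82, 1170),
  (657, 1041, 594, 146), (1169, 529, 137, 1097), (145, 529, 642, 648),
  (1169, 593, 1090, 8), (145, 593, 1097, 521), (657, 81, 1170, 530),
  (145, 1041, 1154, 1160), (1169, 529, 1106, 146), (657, 1041, 137, 585),
  (1169, 81, 658, 1042), (145, 1105, 585, 1033), (657, 1105, 578, 8)]

/-- `A` is covered by the image of the standard cap under the map with columns `q`. -/
def covers (A : List ℕ) (q : ℕ × ℕ × ℕ × ℕ) : Bool :=
  A.all (fun x => L0.any (fun s => Nat.beq (comb s q.1 q.2.1 q.2.2.1 q.2.2.2) x))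

/-- Some map of the table works for `A`. -/
def good (A : List ℕ) : Bool := table.any (covers A)

/-- `y` is excluded by `x` and some member of `A`. -/
def bad (x : ℕ) (A : List ℕ) (y : ℕ) : Bool :=
  A.any (fun a => Nat.beq (addc a x) y || Nat.beq (addc a x) (negc y))

/-- Exhaustive search over all symmetric caps containing `A`. -/
def search : ℕ → List ℕ → List ℕ → Bool
  | 0, _, _ => false
  | _ + 1, [], A => Nat.blt A.length 20 || good A
  | n + 1, x :: cs, A => Nat.blt (A.length + 2 * (cs.length + 1)) 20 ||
      (search n (cs.filter (fun y => !(bad x A y))) (x :: negc x :: A) && search n cs A)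

/-- Candidate representatives of weight at least three. -/
def reps : List ℕ := [584, 1096, 648, 1160, 577, 1089, 641, 1153, 521, 1033, 73, 585, 1097, 137,
  649, 1161, 529, 1041, 81, 593, 1105, 145, 657, 1169]

/-- The starting points. -/
def A0 : List ℕ := [1, 8, 64, 512, 2, 16, 128, 1024]

lemma search_true : search 30 reps A0 = true := by decide +kernel

/-- First pruning test. -/
def g3 (a b c : ℕ) : Bool := inS0 (addc (addc a b) (negc c))

/-- Second test. -/
def g4 (a b c d : ℕ) : Bool :=
  inS0 (addc (addc a b) (negc d)) && (inS0 (addc a (addc c d)) && (inS0 (addc b (addc c d)) &&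
    (inS0 (addc (addc a (negc b)) (addc (negc c) d)) &&
      inS0 (addc (addc a (negc b)) (addc c (negc d))))))

/-- The images of ten representatives. -/
def ten (a b c d : ℕ) : List ℕ := [a, b, c, d, addc (addc a b) (negc c), addc (addc a b) (negc d),
  addc a (addc c d), addc b (addc c d), addc (addc a (negc b)) (addc (negc c) d),
  addc (addc a (negc b)) (addc c (negc d))]

/-- The standard basis lies in the image. -/
def surj (a b c d : ℕ) : Bool :=
  [1, 8, 64, 512].all (fun e => (ten a b c d).any (fun r => Nat.beq r e || Nat.beq (negc r) e))

/-- All maps of the standard cap into itself are surjective. -/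
def checkSurj : Bool :=
  L0.all fun a => L0.all fun b => L0.all fun c => !(g3 a b c) ||
    L0.all fun d => !(g4 a b c d) || surj a b c d

/-- The number of maps. -/
def count : ℕ :=
  (L0.map fun a => (L0.map fun b => (L0.map fun c => bif g3 a b c then
    (L0.map fun d => bif g4 a b c d then 1 else 0).sum else 0).sum).sum).sum

lemma checkSurj_true : checkSurj = true := by decide +kernel

lemma count_eq : count = 2880 := by decide +kernel

/-- Soundness of the search. -/
lemma search_sound (C : Set ℕ) (hneg : ∀ c ∈ C, negc c ∈ C) (hnn : ∀ c ∈ C, negc (negc c) = c)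
    (hcap : ∀ a ∈ C, ∀ x ∈ C, a ≠ x → addc a x ∉ C)
    (hcard : ∀ l : List ℕ, (∀ c ∈ C, c ∈ l) → 20 ≤ l.length) :
    ∀ (n : ℕ) (cs A : List ℕ), search n cs A = true → (∀ a ∈ A, a ∈ C) →
      (∀ c ∈ C, c ∈ A ∨ c ∈ cs ∨ negc c ∈ cs) → ∃ q ∈ table, ∀ c ∈ C,
        ∃ s ∈ L0, comb s q.1 q.2.1 q.2.2.1 q.2.2.2 = c := by
  intro n
  induction n with
  | zero => intro cs A h; simp [search] at h
  | succ n ih =>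
    intro cs A h hA hC
    cases cs with
    | nil =>
      have hC' : ∀ c ∈ C, c ∈ A := by
        intro c hc
        rcases hC c hc with h | h | h
        · exact h
        · simp at h
        · simp at h
      simp only [search, Bool.or_eq_true] at h
      rcases h with h | h
      · have h1 : A.length < 20 := Nat.blt_eq ▸ h
        have := hcard A hC'
        omega
      · simp only [good, List.any_eq_true] at h
        obtain ⟨q, hq, hq'⟩ := h
        refine ⟨q, hq, fun c hc => ?_⟩
        simp only [covers, List.all_eq_true, List.any_eq_true] at hq'
        obtain ⟨s, hs, hs'⟩ := hq' c (hC' c hc)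
        exact ⟨s, hs, Nat.eq_of_beq_eq_true hs'⟩
    | cons x cs =>
      simp only [search, Bool.or_eq_true, Bool.and_eq_true] at h
      rcases h with h | ⟨h1, h2⟩
      · have h1 : A.length + 2 * (cs.length + 1) < 20 := Nat.blt_eq ▸ h
        have := hcard (A ++ ((x :: cs) ++ (x :: cs).map negc)) (by
          intro c hc
          rw [List.mem_append, List.mem_append]
          rcases hC c hc with h | h | h
          · exact Or.inl h
          · exact Or.inr (Or.inl h)
          · exact Or.inr (Or.inr (List.mem_map.2 ⟨negc c, h, hnn c hc⟩)))
        simp at this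
        omega
      · by_cases hx : x ∈ C
        · refine ih _ _ h1 ?_ ?_
          · intro a ha
            simp only [List.mem_cons] at ha
            rcases ha with rfl | rfl | ha
            · exact hx
            · exact hneg x hx
            · exact hA a ha
          · -- a candidate in `C` that was filtered out equals `x` or `-x`
            have hf : ∀ y ∈ C, y ∈ cs → (y = x ∨ y = negc x) ∨
                y ∈ cs.filter (fun y => !(bad x A y)) := by
              intro y hy hycs
              by_cases hb : bad x A y = true
              · left
                simp only [bad, List.any_eq_true, Bool.or_eq_true] at hb
                obtain ⟨a, ha, hb | hb⟩ := hb
                · have e := Nat.eq_of_beq_eq_true hb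
                  by_cases hax : a = x
                  · subst hax; right; exact e.symm
                  · exact absurd (e ▸ hy) (hcap a (hA a ha) x hx hax)
                · have e := Nat.eq_of_beq_eq_true hb
                  by_cases hax : a = x
                  · subst hax
                    left
                    have e' : negc a = negc y := e
                    rw [← hnn y hy, ← e', hnn a hx]
                  · exact absurd (e ▸ hneg y hy) (hcap a (hA a ha) x hx hax)
              · right
                refine List.mem_filter.2 ⟨hycs, ?_⟩
                simpa using hb
            intro c hc
            simp only [List.mem_cons]
            rcases hC c hc with h | h | h
            · exact Or.inl (Or.inr (Or.inr h))
            · rcases List.mem_cons.1 h with h | h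
              · exact Or.inl (Or.inl h)
              · rcases hf c hc h with (h | h) | h
                · exact Or.inl (Or.inl h)
                · exact Or.inl (Or.inr (Or.inl h))
                · exact Or.inr (Or.inl h)
            · rcases List.mem_cons.1 h with h | h
              · refine Or.inl (Or.inr (Or.inl ?_))
                rw [← h, hnn c hc]
              · rcases hf _ (hneg c hc) h with (h | h) | h
                · refine Or.inl (Or.inr (Or.inl ?_))
                  rw [← h, hnn c hc]
                · refine Or.inl (Or.inl ?_)
                  rw [← hnn c hc, h, hnn x hx]
                · exact Or.inr (Or.inr h)
        · refine ih _ _ h2 hA ?_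
          intro c hc
          rcases hC c hc with h | h | h
          · exact Or.inl h
          · rcases List.mem_cons.1 h with h | h
            · exact absurd (h ▸ hc) hx
            · exact Or.inr (Or.inl h)
          · rcases List.mem_cons.1 h with h | h
            · exact absurd (h ▸ hneg c hc) hx
            · exact Or.inr (Or.inr h)

lemma start_aux : ∀ x, enc x = 0 ∨ enc x ∈ A0 ∨ enc x ∈ reps ∨ negc (enc x) ∈ reps ∨
    ∃ a ∈ A0, ∃ b ∈ A0, a ≠ b ∧ addc a b = enc x := forallV (by decide +kernel)

/-- Symmetric 20-caps containing the standard basis are linear images of the standard cap. -/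
lemma classify_frame {S : Finset (Fin 4 → ZMod 3)} (hS : IsCap S) (h20 : S.card = 20)
    (hsym : ∀ x ∈ S, -x ∈ S) (he : ∀ i, Pi.single i 1 ∈ S) :
    ∃ v : Fin 4 → Fin 4 → ZMod 3, S ⊆ S0.image (lin v) := by
  have hneg0 : ∀ x : Fin 4 → ZMod 3, x = -x → x = 0 := by
    intro x hx
    funext i
    exact (by decide : ∀ a : ZMod 3, a = -a → a = 0) (x i) (congrFun hx i)
  have h0 : (0 : Fin 4 → ZMod 3) ∉ S := by
    intro h0
    have h1 := he 0
    have := (cap_third hS h0 h1 (hsym _ h1)).1 (by simp)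
    exact absurd (congrFun this.1 0) (by decide)
  have hadd : ∀ x ∈ S, ∀ y ∈ S, x ≠ y → x + y ∉ S := by
    intro x hx y hy hxy h
    have := (cap_third hS hx hy (hsym _ h)).1 (by abel)
    exact hxy this.1.symm
  have hsound := search_sound {c | ∃ x ∈ S, enc x = c} ?_ ?_ ?_ ?_ 30 reps A0 search_true ?_ ?_
  · obtain ⟨q, hq, h⟩ := hsound
    have hdec : ∀ q ∈ table, enc (dec q.1) = q.1 ∧ enc (dec q.2.1) = q.2.1 ∧
        enc (dec q.2.2.1) = q.2.2.1 ∧ enc (dec q.2.2.2) = q.2.2.2 := by decide +kernel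
    obtain ⟨q0, q1, q2, q3⟩ := hdec q hq
    refine ⟨![dec q.1, dec q.2.1, dec q.2.2.1, dec q.2.2.2], fun x hx => ?_⟩
    obtain ⟨s, hs, hs'⟩ := h (enc x) ⟨x, hx, rfl⟩
    have es := enc_dec_L0 s hs
    refine mem_image.2 ⟨dec s, (mem_S0_iff _).2 (by rw [es]; exact hs), enc_inj ?_⟩
    rw [enc_lin, es, ← hs']
    change comb s (enc (dec q.1)) (enc (dec q.2.1)) (enc (dec q.2.2.1)) (enc (dec q.2.2.2)) = _
    rw [q0, q1, q2, q3]
  · rintro _ ⟨x, hx, rfl⟩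
    exact ⟨-x, hsym x hx, enc_neg x⟩
  · rintro _ ⟨x, hx, rfl⟩
    rw [← enc_neg, ← enc_neg, neg_neg]
  · rintro _ ⟨x, hx, rfl⟩ _ ⟨y, hy, rfl⟩ hxy ⟨z, hz, hz'⟩
    rw [← enc_add] at hz'
    have := enc_inj hz'
    subst this
    exact hadd x hx y hy (fun e => hxy (by rw [e])) hz
  · intro l hl
    have : S.image enc ⊆ l.toFinset := by
      intro c hc
      obtain ⟨x, hx, rfl⟩ := mem_image.1 hc
      exact List.mem_toFinset.2 (hl _ ⟨x, hx, rfl⟩)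
    have h1 := Finset.card_le_card this
    rw [Finset.card_image_of_injective _ (fun x y h => enc_inj h), h20] at h1
    exact h1.trans (List.toFinset_card_le l)
  all_goals
    have hA0 : ∀ a ∈ A0, ∃ x ∈ S, enc x = a := by
      intro a ha
      simp only [A0, List.mem_cons, List.not_mem_nil, or_false] at ha
      rcases ha with rfl | rfl | rfl | rfl | rfl | rfl | rfl | rfl
      · exact ⟨_, he 0, by decide⟩
      · exact ⟨_, he 1, by decide⟩
      · exact ⟨_, he 2, by decide⟩
      · exact ⟨_, he 3, by decide⟩
      · exact ⟨_, hsym _ (he 0), by decide⟩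
      · exact ⟨_, hsym _ (he 1), by decide⟩
      · exact ⟨_, hsym _ (he 2), by decide⟩
      · exact ⟨_, hsym _ (he 3), by decide⟩
  · exact hA0
  · rintro _ ⟨x, hx, rfl⟩
    rcases start_aux x with h | h | h | h | ⟨a, ha, b, hb, hab, h⟩
    · exfalso
      have : x = 0 := enc_inj (h.trans (by decide))
      exact h0 (this ▸ hx)
    · exact Or.inl h
    · exact Or.inr (Or.inl h)
    · exact Or.inr (Or.inr h)
    · exfalso
      obtain ⟨y, hy, rfl⟩ := hA0 a ha
      obtain ⟨z, hz, rfl⟩ := hA0 b hb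
      rw [← enc_add] at h
      have := enc_inj h
      subst this
      exact hadd y hy z hz (fun e => hab (by rw [e])) hx

lemma image_cap {S : Finset (Fin 4 → ZMod 3)} (hS : IsCap S)
    (T : (Fin 4 → ZMod 3) ≃ₗ[ZMod 3] (Fin 4 → ZMod 3)) : IsCap (S.image (fun x => T x)) := by
  intro x hx y hy z hz hxy hxz hyz h
  rw [mem_image] at hx hy hz
  obtain ⟨x, hx, rfl⟩ := hx
  obtain ⟨y, hy, rfl⟩ := hy
  obtain ⟨z, hz, rfl⟩ := hz
  refine hS x hx y hy z hz (fun e => hxy (by rw [e])) (fun e => hxz (by rw [e]))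
    (fun e => hyz (by rw [e])) (T.injective ?_)
  rw [map_add, map_add, h, map_zero]

/-- A 20-cap in `AG(4,3)` spans. -/
lemma span_top {S : Finset (Fin 4 → ZMod 3)} (hS : IsCap S) (h20 : S.card = 20) :
    Submodule.span (ZMod 3) (S : Set (Fin 4 → ZMod 3)) = ⊤ := by
  by_contra hne
  obtain ⟨f, hf0, hf⟩ := Submodule.exists_le_ker_of_lt_top _ (lt_top_iff_ne_top.2 hne)
  set u : Fin 4 → ZMod 3 := fun i => f (Pi.single i 1) with hu
  have hfu : ∀ x, f x = u ⬝ᵥ x := by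
    intro x
    conv_lhs => rw [← Finset.univ_sum_single x]
    rw [map_sum, dotProduct]
    refine Finset.sum_congr rfl fun i _ => ?_
    have : (Pi.single i (x i) : Fin 4 → ZMod 3) = x i • Pi.single i 1 := by
      rw [← Pi.single_smul]; simp
    rw [this, map_smul, smul_eq_mul, mul_comm]
  have hu0 : u ≠ 0 := by
    intro h
    apply hf0
    ext1 x
    apply LinearMap.ext
    intro y
    simp [hfu, h]
  have := N_le cap3 hS hu0 0
  have hN : N S u 0 = 20 := by
    rw [N, Finset.filter_true_of_mem, h20]
    intro x hx
    rw [← hfu]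
    exact hf (Submodule.subset_span hx)
  omega

/-- Classification: 20-caps with sum zero are linearly equivalent to the standard one. -/
lemma classify {S : Finset (Fin 4 → ZMod 3)} (hS : IsCap S) (h20 : S.card = 20)
    (h0 : ∑ x ∈ S, x = 0) :
    ∃ T : (Fin 4 → ZMod 3) ≃ₗ[ZMod 3] (Fin 4 → ZMod 3), S0.image (fun x => T x) = S := by
  classical
  have hsym := symm_of_card20 hS h20 h0
  obtain ⟨b, hbS, hspan, hli⟩ := exists_linearIndependent (ZMod 3) (S : Set (Fin 4 → ZMod 3))
  rw [span_top hS h20] at hspan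
  let B : Module.Basis b (ZMod 3) (Fin 4 → ZMod 3) := Module.Basis.mk hli (by simp [hspan])
  let e : b ≃ Fin 4 := B.indexEquiv (Pi.basisFun (ZMod 3) (Fin 4))
  let B' := B.reindex e
  have hB' : ∀ i, B' i ∈ S := by
    intro i
    have : B' i = (e.symm i : Fin 4 → ZMod 3) := by
      simp [B', B]
    rw [this]
    exact hbS (e.symm i).2
  let φ : (Fin 4 → ZMod 3) ≃ₗ[ZMod 3] (Fin 4 → ZMod 3) := B'.equivFun
  have hφ : ∀ i, φ (B' i) = Pi.single i 1 := by
    intro i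
    funext j
    simp [φ, Module.Basis.equivFun_self, Pi.single_apply, eq_comm]
  set S' := S.image (fun x => φ x) with hS'
  have hc' : IsCap S' := image_cap hS φ
  have h20' : S'.card = 20 := by rw [hS', Finset.card_image_of_injective _ φ.injective, h20]
  obtain ⟨v, hv⟩ := classify_frame hc' h20' (by
      intro x hx
      obtain ⟨y, hy, rfl⟩ := mem_image.1 hx
      exact mem_image.2 ⟨-y, hsym y hy, map_neg φ y⟩)
    (fun i => mem_image.2 ⟨B' i, hB' i, hφ i⟩)
  have heq : S' = S0.image (lin v) := Finset.eq_of_subset_of_card_le hv (by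
    rw [h20', ← card_S0]; exact Finset.card_image_le)
  have hsurj : Function.Surjective (lin v) := by
    rw [← LinearMap.range_eq_top, eq_top_iff, ← span_top hc' h20', Submodule.span_le]
    intro x hx
    obtain ⟨y, _, hy⟩ := mem_image.1 (hv hx)
    exact ⟨y, hy⟩
  have hinj : Function.Injective (lin v) := LinearMap.injective_iff_surjective.2 hsurj
  let ψ := LinearEquiv.ofBijective (lin v) ⟨hinj, hsurj⟩
  refine ⟨ψ.trans φ.symm, ?_⟩
  have : S0.image (fun x => (ψ.trans φ.symm) x) = S'.image (fun x => φ.symm x) := by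
    rw [heq, Finset.image_image]; rfl
  rw [this, hS', Finset.image_image]
  simp [Function.comp_def]

/-- Maximal caps have exactly 20 points. -/
lemma card_maximal {S : Finset (Fin 4 → ZMod 3)} (hS : MaximalCap S) : S.card = 20 := by
  classical
  obtain ⟨hc, hmax⟩ := hS
  have hge := hmax S0 isCap_S0
  rw [card_S0] at hge
  by_contra hne
  obtain ⟨E, hE, hE20⟩ := Finset.exists_subset_card_eq hge
  obtain ⟨x, hxS, hxE⟩ : ∃ x ∈ S, x ∉ E := by
    by_contra hall
    push Not at hall
    have := Finset.card_le_card hall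
    omega
  set t := ∑ y ∈ E, y with ht
  have htr : ∀ D : Finset (Fin 4 → ZMod 3), IsCap D → IsCap (D.image (fun y => y + t)) := by
    intro D hD a ha b hb c hc' hab hac hbc h
    rw [mem_image] at ha hb hc'
    obtain ⟨a, ha, rfl⟩ := ha
    obtain ⟨b, hb, rfl⟩ := hb
    obtain ⟨c, hc', rfl⟩ := hc'
    refine hD a ha b hb c hc' (fun e => hab (by rw [e])) (fun e => hac (by rw [e]))
      (fun e => hbc (by rw [e])) ?_
    rw [← h]
    funext i
    exact (by decide : ∀ a b c t : ZMod 3, a + b + c = a + t + (b + t) + (c + t))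
      (a i) (b i) (c i) (t i)
  have hinj : Function.Injective (fun y : Fin 4 → ZMod 3 => y + t) := add_left_injective t
  obtain ⟨T, hT⟩ := classify (htr E (cap_mono hc hE))
    (by rw [Finset.card_image_of_injective _ hinj, hE20]) (by
      rw [Finset.sum_image (fun a _ b _ h => hinj h), Finset.sum_add_distrib, ← ht,
        Finset.sum_const, hE20]
      funext i
      exact (by decide : ∀ a : ZMod 3, a + 20 • a = 0) (t i))
  set w := T.symm (x + t) with hw
  have hTw : T w = x + t := by rw [hw, T.apply_symm_apply]
  refine S0_complete w ?_ ?_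
  · intro h
    have : T w ∈ E.image (fun y => y + t) := hT ▸ mem_image_of_mem (fun x => T x) h
    rw [hTw] at this
    obtain ⟨y, hy, hyx⟩ := mem_image.1 this
    exact hxE (hinj hyx ▸ hy)
  · have h1 := image_cap (htr S hc) T.symm
    refine cap_mono h1 ?_
    intro y hy
    rcases Finset.mem_insert.1 hy with rfl | hy
    · exact mem_image.2 ⟨x + t, mem_image_of_mem _ hxS, rfl⟩
    · have : T y ∈ E.image (fun y => y + t) := hT ▸ mem_image_of_mem (fun x => T x) hy
      obtain ⟨z, hz, hzy⟩ := mem_image.1 this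
      exact mem_image.2 ⟨T y, mem_image.2 ⟨z, hE hz, hzy⟩, T.symm_apply_apply y⟩


lemma g3_iff (a b c : Fin 4 → ZMod 3) : g3 (enc a) (enc b) (enc c) = true ↔ a + b + -c ∈ S0 := by
  rw [mem_S0, g3, enc_add, enc_add, enc_neg]

lemma g4_iff (a b c d : Fin 4 → ZMod 3) : g4 (enc a) (enc b) (enc c) (enc d) = true ↔
    a + b + -d ∈ S0 ∧ a + (c + d) ∈ S0 ∧ b + (c + d) ∈ S0 ∧ a + -b + (-c + d) ∈ S0 ∧
      a + -b + (c + -d) ∈ S0 := by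
  simp only [mem_S0, g4, enc_add, enc_neg, Bool.and_eq_true]

lemma S0_neg (x : Fin 4 → ZMod 3) (hx : x ∈ S0) : -x ∈ S0 := by
  rw [mem_S0_iff, enc_neg]
  exact (by decide +kernel : ∀ c ∈ L0, negc c ∈ L0) _ ((mem_S0_iff x).1 hx)

/-- Ten representatives of the standard cap up to sign. -/
def R10 : List (Fin 4 → ZMod 3) := [![1, 0, 0, 0], ![0, 1, 0, 0], ![0, 0, 1, 0], ![0, 0, 0, 1],
  ![1, 1, -1, 0], ![1, 1, 0, -1], ![1, 0, 1, 1], ![0, 1, 1, 1], ![1, -1, -1, 1], ![1, -1, 1, -1]]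

lemma S0_rep_aux : ∀ x, inS0 (enc x) = true → ∃ r ∈ R10, x = r ∨ x = -r :=
  forallV (by decide +kernel)

lemma R10_mem : ∀ r ∈ R10, r ∈ S0 := by
  have : ∀ r ∈ R10, inS0 (enc r) = true := by decide +kernel
  intro r hr
  exact (mem_S0 r).2 (this r hr)

lemma lin_R10 (v : Fin 4 → Fin 4 → ZMod 3) : R10.map (lin v) =
    [v 0, v 1, v 2, v 3, v 0 + v 1 + -v 2, v 0 + v 1 + -v 3, v 0 + (v 2 + v 3), v 1 + (v 2 + v 3),
      v 0 + -v 1 + (-v 2 + v 3), v 0 + -v 1 + (v 2 + -v 3)] := by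
  simp [R10, lin_apply]

lemma ten_eq (a b c d : Fin 4 → ZMod 3) : ten (enc a) (enc b) (enc c) (enc d) =
    [a, b, c, d, a + b + -c, a + b + -d, a + (c + d), b + (c + d),
      a + -b + (-c + d), a + -b + (c + -d)].map enc := by
  simp [ten, enc_add, enc_neg]

/-- The condition on the images of the basis vectors. -/
def Adm (q : (Fin 4 → ZMod 3) × (Fin 4 → ZMod 3) × (Fin 4 → ZMod 3) × (Fin 4 → ZMod 3)) : Prop :=
  g3 (enc q.1) (enc q.2.1) (enc q.2.2.1) = true ∧
    g4 (enc q.1) (enc q.2.1) (enc q.2.2.1) (enc q.2.2.2) = true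

instance : DecidablePred Adm := fun q => by unfold Adm; infer_instance

/-- The finite set of admissible quadruples. -/
def quads : Finset ((Fin 4 → ZMod 3) × (Fin 4 → ZMod 3) × (Fin 4 → ZMod 3) × (Fin 4 → ZMod 3)) :=
  (S0 ×ˢ S0 ×ˢ S0 ×ˢ S0).filter Adm

lemma card_quads : quads.card = 2880 := by
  rw [← count_eq, count, quads, Finset.card_filter, Finset.sum_product, ← sum_S0]
  refine Finset.sum_congr rfl fun a _ => ?_
  rw [Finset.sum_product, ← sum_S0]
  refine Finset.sum_congr rfl fun b _ => ?_
  rw [Finset.sum_product, ← sum_S0]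
  refine Finset.sum_congr rfl fun c _ => ?_
  rw [← sum_S0]
  cases h3 : g3 (enc a) (enc b) (enc c)
  · simp [Adm, h3]
  · rw [cond_true]
    refine Finset.sum_congr rfl fun d _ => ?_
    cases h4 : g4 (enc a) (enc b) (enc c) (enc d) <;> simp [Adm, h3, h4]

lemma mem_quads (a b c d : Fin 4 → ZMod 3) : (a, b, c, d) ∈ quads ↔
    ∀ r ∈ R10, lin ![a, b, c, d] r ∈ S0 := by
  have h : (∀ r ∈ R10, lin ![a, b, c, d] r ∈ S0) ↔ ∀ y ∈ R10.map (lin ![a, b, c, d]), y ∈ S0 := by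
    simp only [List.forall_mem_map]
  rw [h, lin_R10, quads, mem_filter, Adm]
  simp only [mem_product, g3_iff, g4_iff, List.forall_mem_cons]
  simp
  tauto

lemma lin_surj {a b c d : Fin 4 → ZMod 3} (h : (a, b, c, d) ∈ quads) :
    Function.Surjective (lin ![a, b, c, d]) := by
  rw [quads, mem_filter, Adm] at h
  simp only [mem_product] at h
  obtain ⟨⟨ha, hb, hc, hd⟩, h3, h4⟩ := h
  rw [mem_S0_iff] at ha hb hc hd
  have hs := checkSurj_true
  simp only [checkSurj, List.all_eq_true] at hs
  have hs1 := hs _ ha _ hb _ hc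
  rw [h3, Bool.not_true, Bool.false_or, List.all_eq_true] at hs1
  have hs2 := hs1 _ hd
  rw [h4, Bool.not_true, Bool.false_or, surj, List.all_eq_true] at hs2
  have key : ∀ e : Fin 4 → ZMod 3, enc e ∈ [1, 8, 64, 512] → e ∈ LinearMap.range (lin ![a, b, c, d]) := by
    intro e he
    have h5 := hs2 _ he
    rw [List.any_eq_true] at h5
    obtain ⟨r, hr, h5⟩ := h5
    have h6 := lin_R10 ![a, b, c, d]
    rw [ten_eq, List.mem_map] at hr
    obtain ⟨y, hy, rfl⟩ := hr
    have hy' : y ∈ R10.map (lin ![a, b, c, d]) := by rw [h6]; exact hy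
    obtain ⟨x, _, rfl⟩ := List.mem_map.1 hy'
    rw [Bool.or_eq_true] at h5
    rcases h5 with h5 | h5
    · exact ⟨x, enc_inj (Nat.eq_of_beq_eq_true h5)⟩
    · have := Nat.eq_of_beq_eq_true h5
      rw [← enc_neg, ← map_neg] at this
      exact ⟨-x, enc_inj this⟩
  rw [← LinearMap.range_eq_top, eq_top_iff, ← (Pi.basisFun (ZMod 3) (Fin 4)).span_eq,
    Submodule.span_le]
  rintro _ ⟨i, rfl⟩
  refine key _ ?_
  rw [Pi.basisFun_apply]
  fin_cases i <;> decide

lemma lin_S0 {a b c d : Fin 4 → ZMod 3} (h : (a, b, c, d) ∈ quads) :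
    S0.image (fun x => lin ![a, b, c, d] x) = S0 := by
  have hinj : Function.Injective (lin ![a, b, c, d]) :=
    LinearMap.injective_iff_surjective.2 (lin_surj h)
  refine Finset.eq_of_subset_of_card_le ?_ ?_
  · intro y hy
    obtain ⟨x, hx, rfl⟩ := mem_image.1 hy
    rw [mem_quads] at h
    obtain ⟨r, hr, rfl | rfl⟩ := S0_rep_aux x ((mem_S0 x).1 hx)
    · exact h _ hr
    · rw [map_neg]
      exact S0_neg _ (h _ hr)
  · rw [Finset.card_image_of_injective _ hinj]

lemma lin_self (T : (Fin 4 → ZMod 3) ≃ₗ[ZMod 3] (Fin 4 → ZMod 3)) (x : Fin 4 → ZMod 3) :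
    lin ![T (Pi.single 0 1), T (Pi.single 1 1), T (Pi.single 2 1), T (Pi.single 3 1)] x = T x := by
  have hx : x = x 0 • Pi.single 0 1 + x 1 • Pi.single 1 1 +
      (x 2 • Pi.single 2 1 + x 3 • Pi.single 3 1) := by
    funext i
    fin_cases i <;> simp
  rw [lin_apply]
  conv_rhs => rw [hx]
  simp only [map_add, map_smul]
  rfl

/-- The stabilizer of the standard cap. -/
lemma card_stab_S0 : Nat.card {T : (Fin 4 → ZMod 3) ≃ₗ[ZMod 3] (Fin 4 → ZMod 3) //
    S0.image (fun x => T x) = S0} = 2880 := by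
  have hcard : Nat.card quads = 2880 := by
    rw [Nat.card_eq_fintype_card, Fintype.card_coe, card_quads]
  rw [← hcard]
  have hmem : ∀ T : {T : (Fin 4 → ZMod 3) ≃ₗ[ZMod 3] (Fin 4 → ZMod 3) //
      S0.image (fun x => T x) = S0}, (T.1 (Pi.single 0 1), T.1 (Pi.single 1 1),
        T.1 (Pi.single 2 1), T.1 (Pi.single 3 1)) ∈ quads := by
    rintro ⟨T, hT⟩
    rw [mem_quads]
    intro r hr
    rw [lin_self]
    have : T r ∈ S0.image (fun x => T x) := mem_image_of_mem (fun x => T x) (R10_mem r hr)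
    rwa [hT] at this
  refine Nat.card_eq_of_bijective (fun T => (⟨_, hmem T⟩ : quads)) ⟨?_, ?_⟩
  · rintro ⟨T, hT⟩ ⟨T', hT'⟩ h
    simp only [Subtype.mk.injEq, Prod.mk.injEq] at h
    obtain ⟨h0, h1, h2, h3⟩ := h
    apply Subtype.ext
    apply LinearEquiv.ext
    intro x
    change T x = T' x
    rw [← lin_self T, ← lin_self T', h0, h1, h2, h3]
  · rintro ⟨⟨a, b, c, d⟩, h⟩
    have hsurj := lin_surj h
    have hinj : Function.Injective (lin ![a, b, c, d]) := LinearMap.injective_iff_surjective.2 hsurj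
    refine ⟨⟨LinearEquiv.ofBijective (lin ![a, b, c, d]) ⟨hinj, hsurj⟩, lin_S0 h⟩, ?_⟩
    apply Subtype.ext
    change (lin ![a, b, c, d] (Pi.single 0 1), lin ![a, b, c, d] (Pi.single 1 1),
      lin ![a, b, c, d] (Pi.single 2 1), lin ![a, b, c, d] (Pi.single 3 1)) = (a, b, c, d)
    simp [lin_apply]

end CapAux

/-- A maximal cap `S` in `AG(4,3)` with anchor the zero vector is stabilized (as a set)
by exactly 2880 linear automorphisms of `Fin 4 → ZMod 3`. -/
theorem card_linear_stabilizer_maximal_cap_AG43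
    (S : Finset (Fin 4 → ZMod 3)) (hS : MaximalCap S) (haS : ∑ x ∈ S, x = 0) :
    Nat.card {T : (Fin 4 → ZMod 3) ≃ₗ[ZMod 3] (Fin 4 → ZMod 3) //
      S.image (fun x => T x) = S} = 2880 := by
  obtain ⟨φ, hφ⟩ := CapAux.classify hS.1 (CapAux.card_maximal hS) haS
  have hφ' : S.image (fun x => φ.symm x) = CapAux.S0 := by
    rw [← hφ, Finset.image_image]
    simp [Function.comp_def]
  rw [← CapAux.card_stab_S0]
  refine Nat.card_congr
    { toFun := fun T => ⟨φ.trans (T.1.trans φ.symm), ?_⟩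
      invFun := fun T => ⟨φ.symm.trans (T.1.trans φ), ?_⟩
      left_inv := ?_
      right_inv := ?_ }
  · have : CapAux.S0.image (fun x => (φ.trans (T.1.trans φ.symm)) x) =
        ((CapAux.S0.image (fun x => φ x)).image (fun x => T.1 x)).image (fun x => φ.symm x) := by
      rw [Finset.image_image, Finset.image_image]; rfl
    rw [this, hφ, T.2, hφ']
  · have : S.image (fun x => (φ.symm.trans (T.1.trans φ)) x) =
        ((S.image (fun x => φ.symm x)).image (fun x => T.1 x)).image (fun x => φ x) := by
      rw [Finset.image_image, Finset.image_image]; rfl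
    rw [this, hφ', T.2, hφ]
  · intro T
    apply Subtype.ext
    apply LinearEquiv.ext
    intro x
    simp
  · intro T
    apply Subtype.ext
    apply LinearEquiv.ext
    intro x
    simp
end
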